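/- Let G be a forest. Then the normalized depth function g_{I(G)}(k) = depth(S/I(G)^{[k]}) - (2k-1) is non-increasing for 1 ≤ k ≤ ν(G). -/

import Mathlib

open scoped Classical
open MvPolynomial RingTheory

noncomputable section

/-- `M` is a matching of `G`. -/
def IsMatchingSet {V : Type*} (G : SimpleGraph V) (M : Finset (Sym2 V)) : Prop :=
  (∀ e ∈ M, e ∈ G.edgeSet) ∧
    ∀ e ∈ M, ∀ f ∈ M, e ≠ f → ∀ v : V, v ∈ e → v ∉ f

/-- The matching number `ν(G)`. -/
def matchingNumber {V : Type*} [Fintype V] (G : SimpleGraph V) : ℕ :=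
  sSup {k | ∃ M : Finset (Sym2 V), IsMatchingSet G M ∧ M.card = k}

/-- The `k`-th squarefree power `I(G)^{[k]}` of the edge ideal of a graph `G` on `Fin n`:
the ideal generated by the monomials `x_{V(M)}` for all `k`-matchings `M` of `G`.
For `k = 0` this is the unit ideal. -/
def edgeIdealSqPow (K : Type*) [Field K] {n : ℕ} (G : SimpleGraph (Fin n)) (k : ℕ) :
    Ideal (MvPolynomial (Fin n) K) :=
  Ideal.span {f | ∃ M : Finset (Sym2 (Fin n)), IsMatchingSet G M ∧ M.card = k ∧
    f = ∏ v ∈ Finset.univ.filter (fun v => ∃ e ∈ M, v ∈ e), X v}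

/-- The graded maximal ideal `(x_1, …, x_n)` of the polynomial ring. -/
def maxIdeal (K : Type*) [Field K] (n : ℕ) : Ideal (MvPolynomial (Fin n) K) :=
  Ideal.span (Set.range X)

/-- The depth of `S/I` : the maximum length of an `S/I`-regular sequence contained in
the graded maximal ideal. -/
def depthQuot {K : Type*} [Field K] {n : ℕ} (I : Ideal (MvPolynomial (Fin n) K)) : ℕ :=
  sSup {d | ∃ rs : List (MvPolynomial (Fin n) K), rs.length = d ∧
    (∀ r ∈ rs, r ∈ maxIdeal K n) ∧
    RingTheory.Sequence.IsRegular (MvPolynomial (Fin n) K ⧸ I) rs}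

/-- The normalized depth function of the edge ideal of `G`:
`g_{I(G)}(k) = depth(S/I(G)^{[k]}) - (2k-1)`. -/
def gEdge (K : Type*) [Field K] {n : ℕ} (G : SimpleGraph (Fin n)) (k : ℕ) : ℤ :=
  (depthQuot (edgeIdealSqPow K G k) : ℤ) - (2 * k - 1)

/-!
By Hochster's formula, `depth (S / I(G)^{[k]})` is the minimum of `n - |c| + s` over the vertex sets
`c` and the degrees `s` in which the complex of the subsets of `c` without a `k`-matching has
nonzero cohomology. It is obtained here from the multigraded pieces of the Koszul complex of the
variables and the depth sensitivity of that complex.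

The theorem thus says that the maximum of `|c| - s` drops by at most `2` when `k` becomes `k + 1`.
In a forest without isolated vertices some vertex `y` has a nonempty set of leaves attached to it
and at most one further neighbour `z`. Let `H` be the set of the vertices other than `y` and these
leaves. The cohomology for `k + 1` is, up to a shift by one, the cohomology of a pair built from the
complexes of `H` and `H \ {z}` for `k` and `k + 1`. The inclusion maps of these pairs factor through
cones, so they vanish in cohomology; hence nonzero cohomology is transported from `H` or `H \ {z}`
to the whole set, and the claim follows by induction on `c`.
-/

open scoped Finset

section Koszul

variable {ι R M : Type*} [LinearOrder ι] [CommRing R] [AddCommGroup M] [Module R M]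

/-- The sign `(-1)^i` of the vertex `v`, where `i` is its position in the increasing list of the
elements of `t`; it orients the simplex `t`. -/
def orientSign (v : ι) (t : Finset ι) : ℤ :=
  (-1) ^ #{u ∈ t | u < v}

lemma orientSign_mul_self (v : ι) (t : Finset ι) : orientSign v t * orientSign v t = 1 := by
  rw [orientSign, ← mul_pow, neg_mul_neg, one_mul, one_pow]

lemma orientSign_mul_orientSign_erase {u v : ι} {t : Finset ι} (hu : u ∈ t) (hv : v ∈ t)
    (huv : u ≠ v) :
    orientSign v t * orientSign u (t.erase v) = -(orientSign u t * orientSign v (t.erase u)) := by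
  wlog hlt : u < v generalizing u v
  · rw [this hv hu huv.symm (huv.lt_or_gt.resolve_left hlt), neg_neg]
  have hu_below : {w ∈ t.erase v | w < u} = {w ∈ t | w < u} := by
    rw [Finset.filter_erase, Finset.erase_eq_of_notMem (by simp [hlt.le])]
  have hv_below : {w ∈ t | w < v} = insert u {w ∈ t.erase u | w < v} := by
    rw [Finset.filter_erase, Finset.insert_erase (by simp [hu, hlt])]
  rw [orientSign, orientSign, orientSign, orientSign, hu_below, hv_below,
    Finset.card_insert_of_notMem (by simp)]
  ring

/-- The Koszul differential of the sequence `x` with coefficients in `M`. A cochain of degree `j`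
is a function on the subsets of `ι` of cardinality `j`; all degrees are carried along at once. -/
def koszulD (x : ι → R) : (Finset ι → M) →ₗ[R] (Finset ι → M) where
  toFun f t := ∑ v ∈ t, orientSign v t • x v • f (t.erase v)
  map_add' f g := by
    ext t
    simp only [Pi.add_apply, smul_add, Finset.sum_add_distrib]
  map_smul' r f := by
    ext t
    simp only [Pi.smul_apply, RingHom.id_apply, Finset.smul_sum, smul_comm r]

variable {x : ι → R} {f g : Finset ι → M} {t : Finset ι}

lemma koszulD_apply (x : ι → R) (f : Finset ι → M) (t : Finset ι) :
    koszulD x f t = ∑ v ∈ t, orientSign v t • x v • f (t.erase v) := rfl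

lemma koszulD_congr (h : ∀ v ∈ t, f (t.erase v) = g (t.erase v)) :
    koszulD x f t = koszulD x g t :=
  Finset.sum_congr rfl fun v hv => by rw [h v hv]

lemma koszulD_eq_zero (h : ∀ v ∈ t, f (t.erase v) = 0) : koszulD x f t = 0 :=
  Finset.sum_eq_zero fun v hv => by rw [h v hv, smul_zero, smul_zero]

lemma koszulD_koszulD (x : ι → R) (f : Finset ι → M) : koszulD x (koszulD x f) = 0 := by
  ext t
  simp only [koszulD_apply, Finset.smul_sum, Pi.zero_apply]
  rw [Finset.sum_sigma']
  refine Finset.sum_involution (fun p _ => ⟨p.2, p.1⟩) ?_ ?_ ?_ fun _ _ => rfl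
  all_goals
    rintro ⟨v, u⟩ hvu
    obtain ⟨hv, huv, hu⟩ : v ∈ t ∧ u ≠ v ∧ u ∈ t := by simpa using hvu
  · dsimp only
    rw [Finset.erase_right_comm (a := v) (b := u), smul_comm (x v) (orientSign u _),
      smul_comm (x u) (orientSign v _), smul_comm (x v) (x u), smul_smul (orientSign v t),
      smul_smul (orientSign u t), orientSign_mul_orientSign_erase hu hv huv, neg_smul,
      neg_add_cancel]
  · intro _ h
    exact huv (Sigma.mk.inj h).1
  · simpa using ⟨hu, huv.symm, hv⟩

lemma map_koszulD {N : Type*} [AddCommGroup N] [Module R N] (φ : M →ₗ[R] N) (x : ι → R)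
    (f : Finset ι → M) (t : Finset ι) : φ (koszulD x f t) = koszulD x (φ ∘ f) t := by
  simp only [koszulD_apply, map_sum, map_zsmul, map_smul, Function.comp_apply]

/-- Contraction with the basis vector dual to `v`; it is a homotopy for multiplication by `x v`. -/
def contract (v : ι) (f : Finset ι → M) (t : Finset ι) : M :=
  if v ∈ t then 0 else orientSign v (insert v t) • f (insert v t)

lemma contract_of_mem {v : ι} (hv : v ∈ t) : contract v f t = 0 := if_pos hv

lemma contract_of_notMem {v : ι} (hv : v ∉ t) :
    contract v f t = orientSign v (insert v t) • f (insert v t) := if_neg hv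

lemma contract_eq_zero {v : ι} (h : v ∉ t → f (insert v t) = 0) : contract v f t = 0 := by
  by_cases hv : v ∈ t
  · exact contract_of_mem hv
  · rw [contract_of_notMem hv, h hv, smul_zero]

lemma contract_erase {v : ι} (hv : v ∈ t) : contract v f (t.erase v) = orientSign v t • f t := by
  rw [contract_of_notMem (Finset.notMem_erase v t), Finset.insert_erase hv]

lemma koszulD_insert {v : ι} (hv : v ∉ t) : koszulD x f (insert v t) =
    orientSign v (insert v t) • (x v • f t - koszulD x (contract v f) t) := by
  have hsign : ∀ u ∈ t, orientSign u (insert v t) =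
      -(orientSign v (insert v t) * orientSign u t * orientSign v (insert v (t.erase u))) := by
    intro u hu
    have huv : u ≠ v := fun h => hv (h ▸ hu)
    have hswap := orientSign_mul_orientSign_erase (Finset.mem_insert_of_mem hu)
      (Finset.mem_insert_self v t) huv
    rw [Finset.erase_insert hv, Finset.erase_insert_of_ne huv.symm] at hswap
    linear_combination orientSign v (insert v (t.erase u)) * hswap -
      orientSign u (insert v t) * orientSign_mul_self v (insert v (t.erase u))
  rw [koszulD_apply, Finset.sum_insert hv, Finset.erase_insert hv, smul_sub, sub_eq_add_neg,
    koszulD_apply, Finset.smul_sum, ← Finset.sum_neg_distrib]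
  congr 1
  refine Finset.sum_congr rfl fun u hu => ?_
  have huv : v ≠ u := fun h => hv (h ▸ hu)
  rw [contract_of_notMem (by simp [hv]), hsign u hu, Finset.erase_insert_of_ne huv,
    smul_comm (x u) (orientSign v _), smul_smul, smul_smul, neg_smul, mul_assoc]

lemma koszulD_contract_add_contract_koszulD (x : ι → R) (v : ι) (f : Finset ι → M) :
    koszulD x (contract v f) + contract v (koszulD x f) = x v • f := by
  ext t
  rw [Pi.add_apply, Pi.smul_apply]
  by_cases hv : v ∈ t
  · rw [contract_of_mem hv, add_zero, koszulD_apply, Finset.sum_eq_single_of_mem v hv,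
      contract_erase hv, smul_comm (x v), smul_smul, orientSign_mul_self, one_smul]
    intro u _ huv
    rw [contract_of_mem (Finset.mem_erase_of_ne_of_mem huv.symm hv), smul_zero, smul_zero]
  · rw [contract_of_notMem hv, koszulD_insert hv, smul_smul, orientSign_mul_self, one_smul,
      add_sub_cancel]

/-- Exterior multiplication by the basis vector `v`. -/
def wedge (v : ι) (f : Finset ι → M) (t : Finset ι) : M :=
  if v ∈ t then orientSign v t • f (t.erase v) else 0

lemma wedge_of_mem {v : ι} (hv : v ∈ t) : wedge v f t = orientSign v t • f (t.erase v) :=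
  if_pos hv

lemma wedge_of_notMem {v : ι} (hv : v ∉ t) : wedge v f t = 0 := if_neg hv

lemma contract_wedge {v : ι} (hv : v ∉ t) : contract v (wedge v f) t = f t := by
  rw [contract_of_notMem hv, wedge_of_mem (Finset.mem_insert_self v t), smul_smul,
    orientSign_mul_self, one_smul, Finset.erase_insert hv]

lemma wedge_contract {v : ι} (hv : v ∈ t) : wedge v (contract v f) t = f t := by
  rw [wedge_of_mem hv, contract_erase hv, smul_smul, orientSign_mul_self, one_smul]

lemma koszulD_wedge (x : ι → R) (v : ι) (f : Finset ι → M) :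
    koszulD x (wedge v f) = -wedge v (koszulD x f) := by
  ext t
  rw [Pi.neg_apply]
  by_cases hv : v ∈ t
  · rw [wedge_of_mem hv, koszulD_apply, ← Finset.add_sum_erase _ _ hv,
      wedge_of_notMem (Finset.notMem_erase v t), smul_zero, smul_zero, zero_add, koszulD_apply,
      Finset.smul_sum, ← Finset.sum_neg_distrib]
    refine Finset.sum_congr rfl fun u hu => ?_
    obtain ⟨huv, hut⟩ := Finset.mem_erase.1 hu
    rw [wedge_of_mem (Finset.mem_erase_of_ne_of_mem huv.symm hv), smul_comm (x u), smul_smul,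
      smul_smul, orientSign_mul_orientSign_erase hv hut huv.symm, neg_smul,
      Finset.erase_right_comm]
  · rw [wedge_of_notMem hv, neg_zero]
    exact koszulD_eq_zero fun u _ => wedge_of_notMem fun h => hv (Finset.mem_of_mem_erase h)

end Koszul

section VertexStar

variable {ι : Type*} [DecidableEq ι] {D : Set (Finset ι)} {v : ι}

lemma natCast_card_erase {σ : Finset ι} (hv : v ∈ σ) : (#(σ.erase v) : ℤ) = #σ - 1 := by
  rw [← Finset.card_erase_add_one hv, Nat.cast_succ, add_sub_cancel_right]

lemma natCast_card_insert {σ : Finset ι} (hv : v ∉ σ) : (#(insert v σ) : ℤ) = #σ + 1 := by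
  rw [Finset.card_insert_of_notMem hv, Nat.cast_succ]

/-- The closed star of the vertex `x` in the complex `D`. -/
def vertexStar (D : Set (Finset ι)) (x : ι) : Set (Finset ι) :=
  {σ | insert x σ ∈ D}

lemma isLowerSet_vertexStar (hD : IsLowerSet D) (x : ι) : IsLowerSet (vertexStar D x) :=
  fun _ _ h hσ => hD (Finset.insert_subset_insert x h) hσ

lemma vertexStar_subset (hD : IsLowerSet D) (x : ι) : vertexStar D x ⊆ D :=
  fun _ hσ => hD (Finset.subset_insert x _) hσ

end VertexStar

section Cohomology

variable {ι : Type*} [LinearOrder ι] (R : Type*) [CommRing R]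

/-- The simplicial coboundary: the Koszul differential of the constant sequence `1`. -/
abbrev coboundary : (Finset ι → R) →ₗ[R] (Finset ι → R) :=
  koszulD fun _ => (1 : R)

/-- Exactness, at the sets of cardinality `s`, of the complex of `R`-valued cochains supported on
the family `A`. For a simplicial complex `A` this says that the reduced cohomology `H̃^(s-1)(A; R)`
vanishes; for a difference of two complexes it is a statement on relative cohomology. -/
def CohomologyVanishes (A : Set (Finset ι)) (s : ℤ) : Prop :=
  ∀ f : Finset ι → R, (∀ σ ∉ A, f σ = 0) → (∀ τ ∈ A, (#τ : ℤ) = s + 1 → coboundary R f τ = 0) →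
    ∃ g : Finset ι → R, (∀ σ ∉ A, g σ = 0) ∧ ∀ σ ∈ A, (#σ : ℤ) = s → f σ = coboundary R g σ

variable {R} {D E A N : Set (Finset ι)} {s : ℤ} {v : ι}

lemma coboundary_contract_of_coboundary_eq_zero {f : Finset ι → R} {σ : Finset ι}
    (h : v ∉ σ → coboundary R f (insert v σ) = 0) : coboundary R (contract v f) σ = f σ := by
  have hcartan := congrFun (koszulD_contract_add_contract_koszulD (fun _ => (1 : R)) v f) σ
  rwa [Pi.add_apply, contract_eq_zero h, add_zero, one_smul] at hcartan

lemma contract_coboundary_of_eq_zero {f : Finset ι → R} {σ : Finset ι} (h : f σ = 0) :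
    coboundary R (contract v f) σ = -contract v (coboundary R f) σ := by
  have hcartan := congrFun (koszulD_contract_add_contract_koszulD (fun _ => (1 : R)) v f) σ
  rw [Pi.add_apply, one_smul, h] at hcartan
  exact eq_neg_of_add_eq_zero_left hcartan

namespace CohomologyVanishes

lemma of_isEmpty (hA : ∀ σ ∈ A, (#σ : ℤ) ≠ s) : CohomologyVanishes R A s :=
  fun _ _ _ => ⟨0, fun _ _ => rfl, fun σ hσ hcard => absurd hcard (hA σ hσ)⟩

lemma of_neg (hs : s < 0) : CohomologyVanishes R A s :=
  of_isEmpty fun _ _ => (hs.trans_le (Int.natCast_nonneg _)).ne'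

lemma not_singleton_empty [Nontrivial R] :
    ¬ CohomologyVanishes R ({∅} : Set (Finset ι)) 0 := by
  intro h
  obtain ⟨g, -, hg⟩ := h (fun σ => if σ = ∅ then 1 else 0)
    (fun σ hσ => if_neg hσ) (by rintro _ rfl h; simp at h)
  simpa [koszulD_apply] using hg ∅ rfl (by simp)

-- A cocycle of `E` vanishing on `D` is a relative cocycle, whatever its values off `E`.
lemma exists_coboundary_of_sdiff (hD : IsLowerSet D) (hE : IsLowerSet E)
    (h : CohomologyVanishes R (E \ D) s) {f : Finset ι → R}
    (hf : ∀ σ ∈ D, (#σ : ℤ) = s → f σ = 0)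
    (hcocycle : ∀ τ ∈ E, (#τ : ℤ) = s + 1 → coboundary R f τ = 0) :
    ∃ g : Finset ι → R, (∀ σ ∈ D, g σ = 0) ∧
      ∀ σ ∈ E, (#σ : ℤ) = s → f σ = coboundary R g σ := by
  obtain ⟨g, hg, hfg⟩ := h ((E \ D).indicator f) (fun σ hσ => Set.indicator_of_notMem hσ f) (by
    intro τ hτ hcard
    rw [← hcocycle τ hτ.1 hcard]
    refine koszulD_congr fun v hv => ?_
    by_cases hD' : τ.erase v ∈ D
    · rw [Set.indicator_of_notMem fun h => h.2 hD',
        hf _ hD' (by rw [natCast_card_erase hv, hcard, add_sub_cancel_right])]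
    · have hmem : τ.erase v ∈ E \ D := ⟨hE (Finset.erase_subset v τ) hτ.1, hD'⟩
      exact Set.indicator_of_mem hmem f)
  refine ⟨g, fun σ hσ => hg σ fun h => h.2 hσ, fun σ hσ hcard => ?_⟩
  by_cases hσD : σ ∈ D
  · rw [hf σ hσD hcard, koszulD_eq_zero]
    exact fun v _ => hg _ fun h => h.2 (hD (Finset.erase_subset v σ) hσD)
  · have hmem : σ ∈ E \ D := ⟨hσ, hσD⟩
    rw [← hfg σ hmem hcard, Set.indicator_of_mem hmem]

lemma sdiff_of_forall (hD : IsLowerSet D) (hE : IsLowerSet E)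
    (h : ∀ f : Finset ι → R, (∀ σ ∈ D, f σ = 0) →
      (∀ τ ∈ E, (#τ : ℤ) = s + 1 → coboundary R f τ = 0) →
      ∃ g : Finset ι → R, (∀ σ ∈ D, (#σ : ℤ) = s - 1 → g σ = 0) ∧
        ∀ σ ∈ E, (#σ : ℤ) = s → f σ = coboundary R g σ) :
    CohomologyVanishes R (E \ D) s := by
  intro f hf hcocycle
  have hfD : ∀ σ ∈ D, f σ = 0 := fun σ hσ => hf σ fun h => h.2 hσ
  obtain ⟨g, hg, hfg⟩ := h f hfD (by
    intro τ hτ hcard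
    by_cases hτD : τ ∈ D
    · exact koszulD_eq_zero fun v _ => hfD _ (hD (Finset.erase_subset v τ) hτD)
    · exact hcocycle τ ⟨hτ, hτD⟩ hcard)
  refine ⟨(E \ D).indicator g, fun σ hσ => Set.indicator_of_notMem hσ g, fun σ hσ hcard => ?_⟩
  rw [hfg σ hσ.1 hcard]
  refine koszulD_congr fun v hv => ?_
  by_cases hD' : σ.erase v ∈ D
  · rw [Set.indicator_of_notMem fun h => h.2 hD',
      hg _ hD' (by rw [natCast_card_erase hv, hcard])]
  · have hmem : σ.erase v ∈ E \ D := ⟨hE (Finset.erase_subset v σ) hσ.1, hD'⟩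
    exact (Set.indicator_of_mem hmem g).symm

-- On a lower set, the support conditions on cochains are vacuous.
lemma iff_of_isLowerSet (hD : IsLowerSet D) : CohomologyVanishes R D s ↔
    ∀ f : Finset ι → R, (∀ τ ∈ D, (#τ : ℤ) = s + 1 → coboundary R f τ = 0) →
      ∃ g : Finset ι → R, ∀ σ ∈ D, (#σ : ℤ) = s → f σ = coboundary R g σ := by
  rw [← Set.sdiff_empty (s := D)]
  constructor
  · intro h f hf
    obtain ⟨g, -, hg⟩ := exists_coboundary_of_sdiff isLowerSet_empty hD h (by simp)
      (by simpa only [Set.sdiff_empty] using hf)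
    exact ⟨g, by simpa only [Set.sdiff_empty] using hg⟩
  · refine fun h => sdiff_of_forall isLowerSet_empty hD fun f _ hf => ?_
    obtain ⟨g, hg⟩ := h f (by simpa only [Set.sdiff_empty] using hf)
    exact ⟨g, by simp, by simpa only [Set.sdiff_empty] using hg⟩

lemma of_insert_mem (hD : IsLowerSet D) (hv : ∀ σ ∈ D, (#σ : ℤ) = s → insert v σ ∈ D) :
    CohomologyVanishes R D s := by
  rw [iff_of_isLowerSet hD]
  refine fun f hf => ⟨contract v f, fun σ hσ hcard => ?_⟩
  refine (coboundary_contract_of_coboundary_eq_zero fun hvσ => ?_).symm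
  exact hf _ (hv σ hσ hcard) (by rw [natCast_card_insert hvσ, hcard])

lemma of_insert_mem_iff (hv : ∀ σ, v ∉ σ → (insert v σ ∈ A ↔ σ ∈ A)) :
    CohomologyVanishes R A s := by
  refine fun f hf hcocycle => ⟨contract v f, fun σ hσ => ?_, fun σ hσ hcard => ?_⟩
  · exact contract_eq_zero fun hvσ => hf _ ((hv σ hvσ).not.2 hσ)
  · refine (coboundary_contract_of_coboundary_eq_zero fun hvσ => ?_).symm
    exact hcocycle _ ((hv σ hvσ).2 hσ) (by rw [natCast_card_insert hvσ, hcard])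

lemma sdiff (hD : IsLowerSet D) (hE : IsLowerSet E) (hDE : D ⊆ E)
    (hvD : CohomologyVanishes R D (s - 1)) (hvE : CohomologyVanishes R E s) :
    CohomologyVanishes R (E \ D) s := by
  refine sdiff_of_forall hD hE fun f hf hcocycle => ?_
  obtain ⟨g, hg⟩ := (iff_of_isLowerSet hE).1 hvE f hcocycle
  obtain ⟨p, hp⟩ := (iff_of_isLowerSet hD).1 hvD g fun τ hτ hcard => by
    rw [sub_add_cancel] at hcard
    rw [← hg τ (hDE hτ) hcard, hf τ hτ]
  refine ⟨g - coboundary R p, fun σ hσ hcard => ?_, fun σ hσ hcard => ?_⟩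
  · rw [Pi.sub_apply, hp σ hσ hcard, sub_self]
  · rw [map_sub, koszulD_koszulD, sub_zero, hg σ hσ hcard]

-- The inclusion `D ⊆ E` factors through a cone with apex `v`, so it is zero in cohomology and the
-- long exact sequence of the pair splits into short ones.
lemma of_sdiff_of_insert_mem (hD : IsLowerSet D) (hE : IsLowerSet E)
    (hv : ∀ σ ∈ D, insert v σ ∈ E) (h : CohomologyVanishes R (E \ D) s) :
    CohomologyVanishes R E s := by
  rw [iff_of_isLowerSet hE]
  intro f hf
  obtain ⟨g, -, hg⟩ := exists_coboundary_of_sdiff hD hE h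
    (f := f - coboundary R (contract v f))
    (fun σ hσ hcard => by
      rw [Pi.sub_apply, coboundary_contract_of_coboundary_eq_zero, sub_self]
      exact fun hvσ => hf _ (hv σ hσ) (by rw [natCast_card_insert hvσ, hcard]))
    (fun τ hτ hcard => by rw [map_sub, koszulD_koszulD, sub_zero, hf τ hτ hcard])
  refine ⟨g + contract v f, fun σ hσ hcard => ?_⟩
  rw [map_add, Pi.add_apply, ← hg σ hσ hcard, Pi.sub_apply, sub_add_cancel]

lemma sub_one_of_sdiff_of_insert_mem (hD : IsLowerSet D) (hE : IsLowerSet E)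
    (hv : ∀ σ ∈ D, insert v σ ∈ E) (h : CohomologyVanishes R (E \ D) s) :
    CohomologyVanishes R D (s - 1) := by
  rw [iff_of_isLowerSet hD]
  intro f hf
  obtain ⟨g, hgD, hg⟩ := exists_coboundary_of_sdiff hD hE h (f := coboundary R f)
    (fun σ hσ hcard => hf σ hσ (by rw [hcard, sub_add_cancel]))
    (fun τ _ _ => by rw [koszulD_koszulD, Pi.zero_apply])
  refine ⟨contract v (f - g), fun σ hσ hcard => ?_⟩
  rw [coboundary_contract_of_coboundary_eq_zero, Pi.sub_apply, hgD σ hσ, sub_zero]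
  intro hvσ
  rw [map_sub, Pi.sub_apply, sub_eq_zero]
  exact hg _ (hv σ hσ) (by rw [natCast_card_insert hvσ, hcard, sub_add_cancel])

lemma iff_sdiff_vertexStar (hD : IsLowerSet D) (x : ι) :
    CohomologyVanishes R D s ↔ CohomologyVanishes R (D \ vertexStar D x) s := by
  have hstar := isLowerSet_vertexStar hD x
  refine ⟨sdiff hstar hD (vertexStar_subset hD x) ?_,
    of_sdiff_of_insert_mem hstar hD (v := x) fun σ hσ => hσ⟩
  refine of_insert_mem hstar (v := x) fun σ hσ _ => ?_
  rwa [vertexStar, Set.mem_ofPred_eq, Finset.insert_idem]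

lemma of_image_insert (hN : ∀ τ ∈ N, v ∉ τ)
    (h : CohomologyVanishes R (insert v '' N) (s + 1)) : CohomologyVanishes R N s := by
  intro f hf hcocycle
  obtain ⟨g, hg, hfg⟩ := h (wedge v f) (by
    intro σ hσ
    by_cases hvσ : v ∈ σ
    · rw [wedge_of_mem hvσ, hf _ fun h => hσ ⟨_, h, Finset.insert_erase hvσ⟩, smul_zero]
    · exact wedge_of_notMem hvσ) (by
    rintro _ ⟨τ, hτ, rfl⟩ hcard
    rw [natCast_card_insert (hN τ hτ), add_left_inj] at hcard
    rw [koszulD_wedge, Pi.neg_apply, wedge_of_mem (Finset.mem_insert_self v τ),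
      Finset.erase_insert (hN τ hτ), hcocycle τ hτ hcard, smul_zero, neg_zero])
  refine ⟨-contract v g, fun τ hτ => ?_, fun τ hτ hcard => ?_⟩
  · rw [Pi.neg_apply, neg_eq_zero]
    refine contract_eq_zero fun hvτ => hg _ ?_
    rintro ⟨ρ, hρ, hρτ⟩
    rw [← Finset.erase_insert (hN ρ hρ), hρτ, Finset.erase_insert hvτ] at hρ
    exact hτ hρ
  · have hvτ := hN τ hτ
    have hgτ : g τ = 0 := hg τ fun ⟨ρ, _, hρτ⟩ => hvτ (hρτ ▸ Finset.mem_insert_self v ρ)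
    rw [map_neg, Pi.neg_apply, contract_coboundary_of_eq_zero hgτ, neg_neg,
      contract_of_notMem hvτ, ← hfg _ ⟨τ, hτ, rfl⟩ (by rw [natCast_card_insert hvτ, hcard]),
      ← contract_of_notMem hvτ, contract_wedge hvτ]

lemma image_insert (hN : ∀ τ ∈ N, v ∉ τ) (h : CohomologyVanishes R N s) :
    CohomologyVanishes R (insert v '' N) (s + 1) := by
  intro f hf hcocycle
  obtain ⟨g, hg, hfg⟩ := h (contract v f) (by
    refine fun τ hτ => contract_eq_zero fun hvτ => hf _ ?_
    rintro ⟨ρ, hρ, hρτ⟩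
    rw [← Finset.erase_insert (hN ρ hρ), hρτ, Finset.erase_insert hvτ] at hρ
    exact hτ hρ) (by
    intro τ hτ hcard
    have hvτ := hN τ hτ
    have hfτ : f τ = 0 := hf τ fun ⟨ρ, _, hρτ⟩ => hvτ (hρτ ▸ Finset.mem_insert_self v ρ)
    rw [contract_coboundary_of_eq_zero hfτ, neg_eq_zero]
    exact contract_eq_zero fun _ =>
      hcocycle _ ⟨τ, hτ, rfl⟩ (by rw [natCast_card_insert hvτ, hcard]))
  refine ⟨-wedge v g, fun σ hσ => ?_, ?_⟩
  · rw [Pi.neg_apply, neg_eq_zero]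
    by_cases hvσ : v ∈ σ
    · rw [wedge_of_mem hvσ, hg _ fun h => hσ ⟨_, h, Finset.insert_erase hvσ⟩, smul_zero]
    · exact wedge_of_notMem hvσ
  · rintro _ ⟨τ, hτ, rfl⟩ hcard
    have hmem := Finset.mem_insert_self v τ
    rw [natCast_card_insert (hN τ hτ), add_left_inj] at hcard
    rw [map_neg, koszulD_wedge, neg_neg, wedge_of_mem hmem, Finset.erase_insert (hN τ hτ),
      ← hfg τ hτ hcard, ← Finset.erase_insert (hN τ hτ), Finset.insert_erase hmem,
      ← wedge_of_mem hmem, wedge_contract hmem]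

lemma image_insert_iff (hN : ∀ τ ∈ N, v ∉ τ) :
    CohomologyVanishes R (insert v '' N) (s + 1) ↔ CohomologyVanishes R N s :=
  ⟨of_image_insert hN, image_insert hN⟩

lemma image_union_iff (W : Finset ι) (hN : ∀ τ ∈ N, Disjoint W τ) :
    CohomologyVanishes R ((W ∪ ·) '' N) (s + #W) ↔ CohomologyVanishes R N s := by
  induction W using Finset.induction_on with
  | empty => simp
  | insert v W hv ih =>
    have hcomp : (insert v W ∪ ·) '' N = insert v '' ((W ∪ ·) '' N) := by
      simp only [Set.image_image, Finset.insert_union]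
    have hvW : ∀ τ ∈ (W ∪ ·) '' N, v ∉ τ := by
      rintro _ ⟨τ, hτ, rfl⟩
      exact Finset.notMem_union.2
        ⟨hv, Finset.disjoint_left.1 (hN τ hτ) (Finset.mem_insert_self v W)⟩
    rw [← ih fun τ hτ => (hN τ hτ).mono_left (Finset.subset_insert v W),
      ← image_insert_iff hvW, hcomp, natCast_card_insert hv, add_assoc]

end CohomologyVanishes

end Cohomology

section DepthSensitivity

open scoped Pointwise

variable {ι S M : Type*} [LinearOrder ι] [CommRing S] [AddCommGroup M] [Module S M]

/-- Vanishing of the `j`-th Koszul cohomology of the sequence `x` on the module `M`. -/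
def KoszulVanishes (x : ι → S) (M : Type*) [AddCommGroup M] [Module S M] (j : ℕ) : Prop :=
  ∀ f : Finset ι → M, (∀ τ, #τ = j + 1 → koszulD x f τ = 0) →
    ∃ g : Finset ι → M, ∀ τ, #τ = j → f τ = koszulD x g τ

variable {x : ι → S} {r : S} {j : ℕ}

lemma exists_koszulD_eq_smul_of_mem_span (hr : r ∈ Ideal.span (Set.range x)) {f : Finset ι → M}
    (hf : ∀ τ, #τ = j + 1 → koszulD x f τ = 0) :
    ∃ h : Finset ι → M, ∀ τ, #τ = j → koszulD x h τ = r • f τ := by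
  induction hr using Submodule.span_induction with
  | mem _ hmem =>
    obtain ⟨v, rfl⟩ := hmem
    refine ⟨contract v f, fun τ hτ => ?_⟩
    have hcartan := congrFun (koszulD_contract_add_contract_koszulD x v f) τ
    rwa [Pi.add_apply, Pi.smul_apply, contract_eq_zero, add_zero] at hcartan
    exact fun hv => hf _ (by rw [Finset.card_insert_of_notMem hv, hτ])
  | zero => exact ⟨0, fun τ _ => by rw [map_zero, zero_smul, Pi.zero_apply]⟩
  | add a b _ _ iha ihb =>
    obtain ⟨ha, hha⟩ := iha
    obtain ⟨hb, hhb⟩ := ihb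
    exact ⟨ha + hb, fun τ hτ => by rw [map_add, Pi.add_apply, hha τ hτ, hhb τ hτ, add_smul]⟩
  | smul a b _ ih =>
    obtain ⟨h, hh⟩ := ih
    exact ⟨a • h, fun τ hτ => by rw [map_smul, Pi.smul_apply, hh τ hτ, smul_assoc]⟩

lemma mkQ_smul_top_eq_zero_iff {m : M} :
    (r • (⊤ : Submodule S M)).mkQ m = 0 ↔ ∃ p, r • p = m := by
  rw [Submodule.mkQ_apply, Submodule.Quotient.mk_eq_zero, Submodule.mem_smul_pointwise_iff_exists]
  simp only [Submodule.mem_top, true_and]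

lemma exists_smul_eq_of_mkQ_eq_zero {α : Type*} {P : α → Prop} {f : α → M}
    (hf : ∀ a, P a → (r • (⊤ : Submodule S M)).mkQ (f a) = 0) :
    ∃ p : α → M, ∀ a, P a → r • p a = f a := by
  have hdiv : ∀ a, ∃ m : M, P a → r • m = f a := fun a => by
    by_cases ha : P a
    · exact (mkQ_smul_top_eq_zero_iff.1 (hf a ha)).imp fun _ hm _ => hm
    · exact ⟨0, fun h => absurd h ha⟩
  exact ⟨_, fun a => (hdiv a).choose_spec⟩

namespace KoszulVanishes

lemma zero_of_isSMulRegular (hr : r ∈ Ideal.span (Set.range x)) (hreg : IsSMulRegular M r) :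
    KoszulVanishes x M 0 := by
  intro f hf
  obtain ⟨h, hh⟩ := exists_koszulD_eq_smul_of_mem_span hr hf
  refine ⟨0, fun τ hτ => hreg ?_⟩
  simp only
  rw [← hh τ hτ, map_zero, Pi.zero_apply, smul_zero, Finset.card_eq_zero.1 hτ]
  exact koszulD_eq_zero fun _ hv => absurd hv (Finset.notMem_empty _)

lemma succ_of_quotSMulTop (hr : r ∈ Ideal.span (Set.range x)) (hreg : IsSMulRegular M r)
    (h : KoszulVanishes x (QuotSMulTop r M) j) : KoszulVanishes x M (j + 1) := by
  intro f hf
  obtain ⟨p, hp⟩ := exists_koszulD_eq_smul_of_mem_span hr hf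
  obtain ⟨gbar, hgbar⟩ := h ((r • ⊤ : Submodule S M).mkQ ∘ p) fun τ hτ => by
    rw [← map_koszulD, hp τ hτ]
    exact mkQ_smul_top_eq_zero_iff.2 ⟨_, rfl⟩
  obtain ⟨g, rfl⟩ := (Submodule.mkQ_surjective _).comp_left gbar
  obtain ⟨q, hq⟩ := exists_smul_eq_of_mkQ_eq_zero (f := p - koszulD x g) fun τ hτ => by
    rw [Pi.sub_apply, map_sub, map_koszulD, ← hgbar τ hτ, Function.comp_apply, sub_self]
  refine ⟨q, fun τ hτ => hreg ?_⟩
  calc r • f τ = koszulD x (p - koszulD x g) τ := by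
        rw [map_sub, koszulD_koszulD, sub_zero, hp τ hτ]
    _ = koszulD x (r • q) τ := koszulD_congr fun v hv =>
        (hq _ (by rw [Finset.card_erase_of_mem hv, hτ, add_tsub_cancel_right])).symm
    _ = r • koszulD x q τ := by rw [map_smul, Pi.smul_apply]

lemma quotSMulTop (hreg : IsSMulRegular M r) (h0 : KoszulVanishes x M j)
    (h1 : KoszulVanishes x M (j + 1)) : KoszulVanishes x (QuotSMulTop r M) j := by
  intro fbar hfbar
  obtain ⟨f, rfl⟩ := (Submodule.mkQ_surjective _).comp_left fbar
  obtain ⟨p, hp⟩ := exists_smul_eq_of_mkQ_eq_zero (f := koszulD x f) fun τ hτ => by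
    rw [map_koszulD, hfbar τ hτ]
  obtain ⟨g, hg⟩ := h1 p fun τ hτ => hreg <| by
    have hrp : koszulD x (r • p) τ = koszulD x (koszulD x f) τ := koszulD_congr fun v hv =>
      hp _ (by rw [Finset.card_erase_of_mem hv, hτ, add_tsub_cancel_right])
    simpa only [map_smul, koszulD_koszulD, Pi.smul_apply, Pi.zero_apply, smul_zero] using hrp
  obtain ⟨q, hq⟩ := h0 (f - r • g) fun τ hτ => by
    rw [map_sub, map_smul, Pi.sub_apply, Pi.smul_apply, ← hg τ hτ, hp τ hτ, sub_self]
  refine ⟨(r • ⊤ : Submodule S M).mkQ ∘ q, fun τ hτ => ?_⟩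
  rw [← map_koszulD, ← hq τ hτ, ← sub_eq_zero]
  refine (map_sub _ _ _).symm.trans ?_
  exact mkQ_smul_top_eq_zero_iff.2 ⟨g τ, (sub_sub_cancel _ _).symm⟩

lemma of_isWeaklyRegular {rs : List S} (hmem : ∀ r ∈ rs, r ∈ Ideal.span (Set.range x))
    (hreg : RingTheory.Sequence.IsWeaklyRegular M rs) (hj : j < rs.length) :
    KoszulVanishes x M j := by
  induction rs generalizing M j with
  | nil => exact absurd hj (Nat.not_lt_zero j)
  | cons r rs ih =>
    obtain ⟨hr, hrs⟩ := List.forall_mem_cons.1 hmem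
    obtain ⟨hreg, hregs⟩ := (RingTheory.Sequence.isWeaklyRegular_cons_iff M r rs).1 hreg
    cases j with
    | zero => exact zero_of_isSMulRegular hr hreg
    | succ j => exact succ_of_quotSMulTop hr hreg (ih hrs hregs (Nat.succ_lt_succ_iff.1 hj))

lemma exists_isSMulRegular [IsNoetherianRing S] [Module.Finite S M] (h : KoszulVanishes x M 0) :
    ∃ r ∈ Ideal.span (Set.range x), IsSMulRegular M r := by
  rw [← Ideal.annihilator_quotient (I := Ideal.span (Set.range x)),
    ← IsSMulRegular.subsingleton_linearMap_iff]
  refine subsingleton_of_forall_eq 0 fun φ => ?_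
  have hann : ∀ v, x v • φ 1 = 0 := fun v => by
    have hv : (x v • 1 : S ⧸ Ideal.span (Set.range x)) = 0 := by
      rw [← map_one (Ideal.Quotient.mk _), Algebra.smul_def, Ideal.Quotient.algebraMap_eq,
        ← map_mul, mul_one, Ideal.Quotient.eq_zero_iff_mem]
      exact Ideal.subset_span ⟨v, rfl⟩
    rw [← map_smul, hv, map_zero]
  obtain ⟨g, hg⟩ := h (fun _ => φ 1) fun τ _ => by
    simp only [koszulD_apply, hann, smul_zero, Finset.sum_const_zero]
  have hφ1 : φ 1 = 0 := by simpa only [koszulD_apply, Finset.sum_empty] using hg ∅ rfl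
  ext
  simpa using hφ1

lemma exists_isWeaklyRegular [IsNoetherianRing S] [Module.Finite S M] {d : ℕ}
    (h : ∀ j < d, KoszulVanishes x M j) :
    ∃ rs : List S, rs.length = d ∧ (∀ r ∈ rs, r ∈ Ideal.span (Set.range x)) ∧
      RingTheory.Sequence.IsWeaklyRegular M rs := by
  induction d generalizing M with
  | zero => exact ⟨[], rfl, by simp, RingTheory.Sequence.IsWeaklyRegular.nil S M⟩
  | succ d ih =>
    obtain ⟨r, hr, hreg⟩ := (h 0 d.succ_pos).exists_isSMulRegular
    obtain ⟨rs, hlen, hmem, hrs⟩ := ih fun j hj =>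
      quotSMulTop hreg (h j (hj.trans d.lt_succ_self)) (h (j + 1) (Nat.succ_lt_succ hj))
    exact ⟨r :: rs, congrArg (· + 1) hlen, List.forall_mem_cons.2 ⟨hr, hmem⟩,
      (RingTheory.Sequence.isWeaklyRegular_cons_iff M r rs).2 ⟨hreg, hrs⟩⟩

end KoszulVanishes

end DepthSensitivity

section StanleyReisner

variable {ι R : Type*} [CommRing R] {D : Set (Finset ι)}

variable (R D) in
/-- The ideal generated by the squarefree monomials `∏ v ∈ σ, x_v` of the nonfaces `σ` of `D`. -/
def stanleyReisnerIdeal : Ideal (MvPolynomial ι R) :=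
  Ideal.span ((fun σ => ∏ v ∈ σ, X v) '' Dᶜ)

lemma sum_single_one_le_iff {σ : Finset ι} {m : ι →₀ ℕ} :
    ∑ v ∈ σ, Finsupp.single v 1 ≤ m ↔ σ ⊆ m.support := by
  have happly (u : ι) :
      (∑ v ∈ σ, Finsupp.single v 1 : ι →₀ ℕ) u = if u ∈ σ then 1 else 0 := by
    simp only [Finsupp.finsetSum_apply, Finsupp.single_apply, Finset.sum_ite_eq']
  refine forall_congr' fun u => ?_
  rw [happly, Finsupp.mem_support_iff]
  split_ifs with hu <;> simp [hu, Nat.one_le_iff_ne_zero]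

lemma mem_stanleyReisnerIdeal_iff (hD : IsLowerSet D) {p : MvPolynomial ι R} :
    p ∈ stanleyReisnerIdeal R D ↔ ∀ m : ι →₀ ℕ, m.support ∈ D → coeff m p = 0 := by
  have hgen : (fun σ => ∏ v ∈ σ, (X v : MvPolynomial ι R)) =
      (fun m => monomial m (1 : R)) ∘ fun σ => ∑ v ∈ σ, Finsupp.single v 1 :=
    funext fun σ => (monomial_sum_one σ _).symm
  rw [stanleyReisnerIdeal, hgen, Set.image_comp, mem_ideal_span_monomial_image]
  refine forall_congr' fun m => ?_
  rw [mem_support_iff, ← not_imp_not, not_not]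
  refine imp_congr_left ?_
  simp only [Set.exists_mem_image, sum_single_one_le_iff, not_exists, not_and]
  exact ⟨fun h => by_contra fun hm => h _ hm subset_rfl, fun hm σ hσ hσm => hσ (hD hσm hm)⟩

end StanleyReisner

section Hochster

variable {ι R : Type*} [LinearOrder ι] [Fintype ι] [CommRing R] {D : Set (Finset ι)} {s : ℤ}

/-- In the Koszul complex of the variables, the coefficient of a monomial `x^m` in the component
`τ` lives in multidegree `m - 1_τ`, and the differential preserves multidegrees. -/
def multidegree (τ : Finset ι) (m : ι →₀ ℕ) : ι → ℤ :=
  fun v => m v - if v ∈ τ then 1 else 0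

/-- The exponent `b + 1_τ` of the monomial of multidegree `b` in the component `τ`. It is only
meaningful if `b + 1_τ` is nonnegative. -/
def exponentAt (b : ι → ℤ) (τ : Finset ι) : ι →₀ ℕ :=
  Finsupp.equivFunOnFinite.symm fun v => (b v + if v ∈ τ then 1 else 0).toNat

/-- The components `τ` in which the Koszul complex of the Stanley–Reisner ring of `D` is nonzero
in multidegree `b`. -/
def degreeFamily (D : Set (Finset ι)) (b : ι → ℤ) : Set (Finset ι) :=
  {τ | (∀ v, 0 ≤ b v + if v ∈ τ then 1 else 0) ∧ (exponentAt b τ).support ∈ D}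

/-- The part of multidegree `b` of a Koszul cochain `F`, taken modulo the Stanley–Reisner ideal
of `D`. -/
def slice (D : Set (Finset ι)) (b : ι → ℤ) (F : Finset ι → MvPolynomial ι R) : Finset ι → R :=
  (degreeFamily D b).indicator fun τ => coeff (exponentAt b τ) (F τ)

variable {b : ι → ℤ} {τ : Finset ι} {F F' : Finset ι → MvPolynomial ι R}

lemma exponentAt_apply (b : ι → ℤ) (τ : Finset ι) (v : ι) :
    exponentAt b τ v = (b v + if v ∈ τ then 1 else 0).toNat := rfl

lemma exponentAt_multidegree (τ : Finset ι) (m : ι →₀ ℕ) :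
    exponentAt (multidegree τ m) τ = m := by
  ext v
  rw [exponentAt_apply, multidegree, sub_add_cancel, Int.toNat_natCast]

lemma multidegree_exponentAt (hτ : τ ∈ degreeFamily D b) :
    multidegree τ (exponentAt b τ) = b := by
  ext v
  rw [multidegree, exponentAt_apply, Int.toNat_of_nonneg (hτ.1 v), add_sub_cancel_right]

lemma mem_degreeFamily_multidegree {m : ι →₀ ℕ} (hm : m.support ∈ D) :
    τ ∈ degreeFamily D (multidegree τ m) :=
  ⟨fun v => by rw [multidegree, sub_add_cancel]; exact Int.natCast_nonneg _,
    by rwa [exponentAt_multidegree]⟩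

lemma slice_of_mem (hτ : τ ∈ degreeFamily D b) :
    slice D b F τ = coeff (exponentAt b τ) (F τ) := Set.indicator_of_mem hτ _

lemma slice_of_notMem (hτ : τ ∉ degreeFamily D b) : slice D b F τ = 0 :=
  Set.indicator_of_notMem hτ _

lemma exponentAt_erase {v : ι} (hv : v ∈ τ) (hb : 0 ≤ b v) :
    exponentAt b (τ.erase v) = exponentAt b τ - Finsupp.single v 1 := by
  ext u
  rw [Finsupp.tsub_apply, exponentAt_apply, exponentAt_apply, Finsupp.single_apply]
  by_cases huv : v = u
  · subst huv
    rw [if_neg (Finset.notMem_erase v τ), if_pos hv, if_pos rfl]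
    omega
  · rw [if_neg huv, Nat.sub_zero]
    simp only [Finset.mem_erase, Ne.symm huv, ne_eq, not_false_eq_true, true_and]

lemma erase_mem_degreeFamily_iff (hD : IsLowerSet D) (hτ : τ ∈ degreeFamily D b) {v : ι}
    (hv : v ∈ τ) : τ.erase v ∈ degreeFamily D b ↔ 0 ≤ b v := by
  refine ⟨fun h => by simpa using h.1 v, fun hb => ⟨fun u => ?_, ?_⟩⟩
  · by_cases huv : u = v
    · simpa [huv] using hb
    · simpa [huv] using hτ.1 u
  · rw [exponentAt_erase hv hb]
    exact hD (Finsupp.support_tsub) hτ.2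

lemma coeff_koszulD_X (hD : IsLowerSet D) (F : Finset ι → MvPolynomial ι R)
    (hτ : τ ∈ degreeFamily D b) :
    coeff (exponentAt b τ) (koszulD (X : ι → MvPolynomial ι R) F τ) =
      coboundary R (slice D b F) τ := by
  rw [koszulD_apply, koszulD_apply, coeff_sum]
  refine Finset.sum_congr rfl fun v hv => ?_
  rw [one_smul, coeff_smul, smul_eq_mul, coeff_X_mul']
  have hsupp : v ∈ (exponentAt b τ).support ↔ 0 ≤ b v := by
    rw [Finsupp.mem_support_iff, exponentAt_apply, if_pos hv]
    omega
  have hfamily := erase_mem_degreeFamily_iff hD hτ hv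
  by_cases hb : 0 ≤ b v
  · rw [if_pos (hsupp.2 hb), slice_of_mem (hfamily.2 hb), exponentAt_erase hv hb]
  · rw [if_neg (hsupp.not.2 hb), slice_of_notMem (hfamily.not.2 hb)]

lemma mk_eq_koszulD_X_iff (hD : IsLowerSet D) :
    (stanleyReisnerIdeal R D).mkQ (F τ) =
      koszulD (X : ι → MvPolynomial ι R) ((stanleyReisnerIdeal R D).mkQ ∘ F') τ ↔
      ∀ b, τ ∈ degreeFamily D b → slice D b F τ = coboundary R (slice D b F') τ := by
  rw [← map_koszulD, ← sub_eq_zero, ← map_sub, Submodule.mkQ_apply, Submodule.Quotient.mk_eq_zero,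
    mem_stanleyReisnerIdeal_iff hD]
  constructor
  · intro h b hτ
    rw [slice_of_mem hτ, ← coeff_koszulD_X hD F' hτ, ← sub_eq_zero, ← coeff_sub]
    exact h _ hτ.2
  · intro h m hm
    have hτ := mem_degreeFamily_multidegree (τ := τ) hm
    have hslice := h _ hτ
    rwa [slice_of_mem hτ, ← coeff_koszulD_X hD F' hτ, exponentAt_multidegree, ← sub_eq_zero,
      ← coeff_sub] at hslice

lemma koszulD_X_eq_zero_iff (hD : IsLowerSet D) :
    koszulD (X : ι → MvPolynomial ι R) ((stanleyReisnerIdeal R D).mkQ ∘ F) τ = 0 ↔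
      ∀ b, τ ∈ degreeFamily D b → coboundary R (slice D b F) τ = 0 := by
  have h := mk_eq_koszulD_X_iff (F := 0) (F' := F) (τ := τ) hD
  rw [Pi.zero_apply, map_zero, eq_comm] at h
  refine h.trans (forall₂_congr fun b hτ => ?_)
  rw [slice_of_mem hτ, Pi.zero_apply, coeff_zero, eq_comm]

lemma finite_setOf_slice_ne_zero (F : Finset ι → MvPolynomial ι R) :
    {b : ι → ℤ | slice D b F ≠ 0}.Finite := by
  refine (Set.finite_iUnion fun τ => ((F τ).support.finite_toSet.image (multidegree τ))).subset ?_
  intro b hb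
  obtain ⟨τ, hτ⟩ := Function.ne_iff.1 hb
  have hmem : τ ∈ degreeFamily D b := by_contra fun h => hτ (slice_of_notMem h)
  rw [slice_of_mem hmem] at hτ
  exact Set.mem_iUnion.2 ⟨τ, exponentAt b τ, mem_support_iff.2 hτ, multidegree_exponentAt hmem⟩

lemma exists_slice_eq {g : (ι → ℤ) → Finset ι → R} (hg : ∀ b, ∀ τ ∉ degreeFamily D b, g b τ = 0)
    (hfin : {b | g b ≠ 0}.Finite) :
    ∃ F : Finset ι → MvPolynomial ι R, ∀ b, slice D b F = g b := by
  refine ⟨fun τ => ∑ b ∈ hfin.toFinset, monomial (exponentAt b τ) (g b τ), fun b => ?_⟩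
  ext τ
  by_cases hτ : τ ∈ degreeFamily D b
  · simp only [slice_of_mem hτ, coeff_sum, coeff_monomial]
    rw [Finset.sum_eq_single b]
    · exact if_pos rfl
    · intro b' _ hne
      refine ite_eq_right_iff.2 fun heq => hg b' τ fun hτ' => hne ?_
      rw [← multidegree_exponentAt hτ, ← multidegree_exponentAt hτ', heq]
    · intro hb
      rw [Set.Finite.mem_toFinset, Set.mem_ofPred_eq, not_not] at hb
      rw [if_pos rfl, hb, Pi.zero_apply]
  · rw [slice_of_notMem hτ, hg b τ hτ]

lemma CohomologyVanishes.of_koszulVanishes (hD : IsLowerSet D) {j : ℕ}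
    (h : KoszulVanishes (X : ι → MvPolynomial ι R) (MvPolynomial ι R ⧸ stanleyReisnerIdeal R D) j)
    (b : ι → ℤ) : CohomologyVanishes R (degreeFamily D b) j := by
  intro f hf hcocycle
  obtain ⟨F, hF⟩ := exists_slice_eq (D := D) (g := Pi.single b f) (fun b' τ hτ => by
      obtain rfl | hb := eq_or_ne b' b
      · rw [Pi.single_eq_same, hf τ hτ]
      · rw [Pi.single_eq_of_ne hb, Pi.zero_apply])
    ((Set.finite_singleton b).subset fun b' hb' => by_contra fun hne =>
      hb' (Pi.single_eq_of_ne (M := fun _ => Finset ι → R) hne f))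
  obtain ⟨gbar, hgbar⟩ := h ((stanleyReisnerIdeal R D).mkQ ∘ F) fun τ hτ => by
    refine (koszulD_X_eq_zero_iff hD).2 fun b' hb' => ?_
    rw [hF b']
    obtain rfl | hb := eq_or_ne b' b
    · rw [Pi.single_eq_same]
      exact hcocycle τ hb' (by rw [hτ, Nat.cast_succ])
    · rw [Pi.single_eq_of_ne hb, map_zero, Pi.zero_apply]
  obtain ⟨g, rfl⟩ := (Submodule.mkQ_surjective _).comp_left gbar
  refine ⟨slice D b g, fun τ hτ => slice_of_notMem hτ, fun τ hτ hcard => ?_⟩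
  have hslice := (mk_eq_koszulD_X_iff hD).1 (hgbar τ (Int.natCast_inj.1 hcard)) b hτ
  rwa [hF b, Pi.single_eq_same] at hslice

lemma KoszulVanishes.of_cohomologyVanishes (hD : IsLowerSet D) {j : ℕ}
    (h : ∀ b, CohomologyVanishes R (degreeFamily D b) j) :
    KoszulVanishes (X : ι → MvPolynomial ι R) (MvPolynomial ι R ⧸ stanleyReisnerIdeal R D) j := by
  intro fbar hfbar
  obtain ⟨F, rfl⟩ := (Submodule.mkQ_surjective _).comp_left fbar
  have hprimitive : ∀ b, ∃ g : Finset ι → R, (∀ τ ∉ degreeFamily D b, g τ = 0) ∧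
      (∀ τ ∈ degreeFamily D b, (#τ : ℤ) = j → slice D b F τ = coboundary R g τ) ∧
      (slice D b F = 0 → g = 0) := by
    intro b
    by_cases hzero : slice D b F = 0
    · exact ⟨0, fun _ _ => rfl, fun τ _ _ => by rw [hzero, map_zero], fun _ => rfl⟩
    · obtain ⟨g, hg, hFg⟩ := h b (slice D b F) (fun τ hτ => slice_of_notMem hτ)
        fun τ hτ hcard => (koszulD_X_eq_zero_iff hD).1 (hfbar τ (by exact_mod_cast hcard)) b hτ
      exact ⟨g, hg, hFg, fun h => absurd h hzero⟩
  choose g hg hFg hg_zero using hprimitive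
  obtain ⟨G, hG⟩ := exists_slice_eq hg
    ((finite_setOf_slice_ne_zero F).subset fun b hb hzero => hb (hg_zero b hzero))
  refine ⟨(stanleyReisnerIdeal R D).mkQ ∘ G, fun τ hτ => ?_⟩
  refine (mk_eq_koszulD_X_iff hD).2 fun b hb => ?_
  rw [hG b]
  exact hFg b τ hb (congrArg _ hτ)

lemma insert_mem_degreeFamily_iff {v : ι} (hb : 1 ≤ b v) (hv : v ∉ τ) :
    insert v τ ∈ degreeFamily D b ↔ τ ∈ degreeFamily D b := by
  have hsupp : (exponentAt b (insert v τ)).support = (exponentAt b τ).support := by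
    ext u
    rw [Finsupp.mem_support_iff, Finsupp.mem_support_iff, exponentAt_apply, exponentAt_apply]
    by_cases huv : u = v
    · subst huv
      rw [if_pos (Finset.mem_insert_self u τ), if_neg hv]
      omega
    · simp only [Finset.mem_insert, huv, false_or]
  refine and_congr (forall_congr' fun u => ?_) (by rw [hsupp])
  by_cases huv : u = v
  · subst huv
    rw [if_pos (Finset.mem_insert_self u τ), if_neg hv]
    omega
  · simp only [Finset.mem_insert, huv, false_or]

lemma degreeFamily_ite (D : Set (Finset ι)) (a : Finset ι) :
    degreeFamily D (fun v => if v ∈ a then 0 else -1) = (aᶜ ∪ ·) '' (D ∩ Set.Iic a) := by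
  have hsupp : ∀ τ, (exponentAt (fun v => if v ∈ a then 0 else -1) τ).support = τ ∩ a := by
    intro τ
    ext u
    rw [Finsupp.mem_support_iff, exponentAt_apply, Finset.mem_inter]
    split_ifs <;> simp_all
  have hnonneg : ∀ τ : Finset ι, (∀ v, (0 : ℤ) ≤ (if v ∈ a then 0 else -1) +
      if v ∈ τ then 1 else 0) ↔ aᶜ ⊆ τ := by
    refine fun τ => forall_congr' fun v => ?_
    rw [Finset.mem_compl]
    split_ifs <;> simp_all
  ext τ
  simp only [degreeFamily, Set.mem_ofPred_eq, hsupp, hnonneg]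
  constructor
  · rintro ⟨haτ, hτ⟩
    refine ⟨τ ∩ a, ⟨hτ, Finset.inter_subset_right⟩, ?_⟩
    ext u
    have := @haτ u
    simp only [Finset.mem_union, Finset.mem_compl, Finset.mem_inter] at this ⊢
    tauto
  · rintro ⟨ρ, ⟨hρ, hρa⟩, rfl⟩
    refine ⟨Finset.subset_union_left, ?_⟩
    rwa [Finset.union_inter_distrib_right, Finset.inter_comm, Finset.inter_compl,
      Finset.empty_union, Finset.inter_eq_left.2 hρa]

lemma cohomologyVanishes_degreeFamily_ite_iff (a : Finset ι) :
    CohomologyVanishes R (degreeFamily D fun v => if v ∈ a then 0 else -1) s ↔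
      CohomologyVanishes R (D ∩ Set.Iic a) (s - Fintype.card ι + #a) := by
  rw [degreeFamily_ite, ← CohomologyVanishes.image_union_iff (N := D ∩ Set.Iic a) aᶜ]
  · have hcard := Finset.card_add_card_compl a
    rw [show s - Fintype.card ι + #a + #aᶜ = s by omega]
  · exact fun τ hτ => disjoint_compl_left.mono_right hτ.2

theorem koszulVanishes_stanleyReisner_iff (hD : IsLowerSet D) {j : ℕ} :
    KoszulVanishes (X : ι → MvPolynomial ι R) (MvPolynomial ι R ⧸ stanleyReisnerIdeal R D) j ↔
      ∀ a, CohomologyVanishes R (D ∩ Set.Iic a) (j - Fintype.card ι + #a) := by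
  constructor
  · intro h a
    exact (cohomologyVanishes_degreeFamily_ite_iff a).1 (.of_koszulVanishes hD h _)
  · refine fun h => .of_cohomologyVanishes hD fun b => ?_
    by_cases hpos : ∃ v, 1 ≤ b v
    · obtain ⟨v, hv⟩ := hpos
      exact .of_insert_mem_iff fun τ hvτ => insert_mem_degreeFamily_iff hv hvτ
    by_cases hneg : ∃ v, b v < -1
    · obtain ⟨v, hv⟩ := hneg
      refine .of_isEmpty fun τ hτ => ?_
      have := hτ.1 v
      split_ifs at this <;> omega
    push Not at hpos hneg
    have hb : b = fun v => if v ∈ ({v | b v = 0} : Finset ι) then 0 else -1 := by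
      ext v
      have := hpos v
      have := hneg v
      simp only [Finset.mem_filter_univ]
      split_ifs <;> omega
    rw [hb, cohomologyVanishes_degreeFamily_ite_iff]
    exact h _

end Hochster

section Depth

lemma isRegular_quotient_of_isWeaklyRegular {S : Type*} [CommRing S] {I m : Ideal S} (hIm : I ≤ m)
    (hm : m ≠ ⊤) {rs : List S} (hrs : ∀ r ∈ rs, r ∈ m)
    (hreg : RingTheory.Sequence.IsWeaklyRegular (S ⧸ I) rs) :
    RingTheory.Sequence.IsRegular (S ⧸ I) rs := by
  refine ⟨hreg, fun htop => hm ?_⟩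
  have hle : Ideal.ofList rs ≤ m := Ideal.span_le.2 hrs
  rw [Ideal.smul_top_eq_map, eq_comm, Submodule.restrictScalars_eq_top_iff,
    Ideal.Quotient.algebraMap_eq] at htop
  have hmap : m.map (Ideal.Quotient.mk I) = ⊤ := top_le_iff.1 (htop ▸ Ideal.map_mono hle)
  rw [← sup_eq_right.2 hIm, ← Ideal.comap_map_quotientMk, hmap, Ideal.comap_top]

variable {K : Type*} [Field K] {n : ℕ} {D : Set (Finset (Fin n))} {c : Finset (Fin n)} {s : ℤ}

lemma mem_maxIdeal_iff {p : MvPolynomial (Fin n) K} : p ∈ maxIdeal K n ↔ coeff 0 p = 0 := by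
  rw [maxIdeal, ← idealOfVars, ← pow_one (idealOfVars _ _), mem_pow_idealOfVars_iff']
  simp only [Nat.lt_one_iff, Finsupp.degree_eq_zero_iff, forall_eq]

lemma maxIdeal_ne_top : maxIdeal K n ≠ ⊤ := by
  rw [Ideal.ne_top_iff_one, mem_maxIdeal_iff, coeff_zero_one]
  exact one_ne_zero

lemma stanleyReisnerIdeal_le_maxIdeal (hD : IsLowerSet D) (hempty : ∅ ∈ D) :
    stanleyReisnerIdeal K D ≤ maxIdeal K n := fun p hp =>
  mem_maxIdeal_iff.2 ((mem_stanleyReisnerIdeal_iff hD).1 hp 0 (by rwa [Finsupp.support_zero]))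

lemma length_le_of_not_cohomologyVanishes (hD : IsLowerSet D)
    (hs : ¬ CohomologyVanishes K (D ∩ Set.Iic c) s) {rs : List (MvPolynomial (Fin n) K)}
    (hmem : ∀ r ∈ rs, r ∈ maxIdeal K n)
    (hreg : RingTheory.Sequence.IsRegular (MvPolynomial (Fin n) K ⧸ stanleyReisnerIdeal K D) rs) :
    (rs.length : ℤ) ≤ n - #c + s := by
  by_contra! hlt
  have hs0 : 0 ≤ s := not_lt.1 fun hneg => hs (.of_neg hneg)
  have hc : #c ≤ n := card_finset_fin_le c
  have hvanish := KoszulVanishes.of_isWeaklyRegular hmem hreg.toIsWeaklyRegular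
    (j := (n - #c + s).toNat) (by omega)
  apply hs
  convert (koszulVanishes_stanleyReisner_iff hD).1 hvanish c using 1
  rw [Fintype.card_fin]
  omega

lemma bddAbove_length_isRegular (hD : IsLowerSet D) (hempty : ∅ ∈ D) :
    BddAbove {d | ∃ rs : List (MvPolynomial (Fin n) K), rs.length = d ∧
      (∀ r ∈ rs, r ∈ maxIdeal K n) ∧
      RingTheory.Sequence.IsRegular (MvPolynomial (Fin n) K ⧸ stanleyReisnerIdeal K D) rs} := by
  refine ⟨n, ?_⟩
  rintro _ ⟨rs, rfl, hmem, hreg⟩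
  have hD0 : D ∩ Set.Iic ∅ = {∅} := by
    ext σ
    simp only [Set.mem_inter_iff, Set.mem_Iic, Finset.subset_empty, Set.mem_singleton_iff,
      and_iff_right_iff_imp]
    exact fun h => h ▸ hempty
  have hbad : ¬ CohomologyVanishes K (D ∩ Set.Iic ∅) 0 :=
    hD0 ▸ CohomologyVanishes.not_singleton_empty
  simpa using length_le_of_not_cohomologyVanishes hD hbad hmem hreg

theorem isLeast_depthQuot_stanleyReisnerIdeal (hD : IsLowerSet D) (hempty : ∅ ∈ D) :
    IsLeast {d : ℤ | ∃ c s, ¬ CohomologyVanishes K (D ∩ Set.Iic c) s ∧ d = n - #c + s}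
      (depthQuot (stanleyReisnerIdeal K D)) := by
  have hlb : (depthQuot (stanleyReisnerIdeal K D) : ℤ) ∈ lowerBounds
      {d : ℤ | ∃ c s, ¬ CohomologyVanishes K (D ∩ Set.Iic c) s ∧ d = n - #c + s} := by
    rintro _ ⟨c, s, hs, rfl⟩
    have hs0 : 0 ≤ s := not_lt.1 fun hneg => hs (.of_neg hneg)
    have hc : #c ≤ n := card_finset_fin_le c
    have hle : depthQuot (stanleyReisnerIdeal K D) ≤ (n - #c + s).toNat := by
      refine csSup_le' ?_
      rintro _ ⟨rs, rfl, hmem, hreg⟩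
      have := length_le_of_not_cohomologyVanishes hD hs hmem hreg
      omega
    omega
  refine ⟨by_contra fun hnot => ?_, hlb⟩
  obtain ⟨rs, hlen, hmem, hreg⟩ := KoszulVanishes.exists_isWeaklyRegular
    (x := (X : Fin n → MvPolynomial (Fin n) K))
    (M := MvPolynomial (Fin n) K ⧸ stanleyReisnerIdeal K D)
    (d := depthQuot (stanleyReisnerIdeal K D) + 1) fun j hj =>
      (koszulVanishes_stanleyReisner_iff hD).2 fun c => by
        by_contra hs
        rw [Fintype.card_fin] at hs
        have hge := hlb ⟨c, _, hs, rfl⟩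
        exact hnot ⟨c, _, hs, by omega⟩
  have hle := le_csSup (bddAbove_length_isRegular hD hempty) ⟨rs, hlen, hmem,
    isRegular_quotient_of_isWeaklyRegular (stanleyReisnerIdeal_le_maxIdeal hD hempty)
      maxIdeal_ne_top hmem hreg⟩
  exact Nat.not_succ_le_self _ hle

end Depth

section Matching

variable {V : Type*} {G : SimpleGraph V} {M : Finset (Sym2 V)} {σ τ : Finset V} {j k : ℕ}
  {v x y : V}

variable (G) in
/-- The induced subgraph of `G` on `σ` has a matching with `k` edges. -/
def HasMatching (k : ℕ) (σ : Finset V) : Prop :=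
  ∃ M : Finset (Sym2 V), IsMatchingSet G M ∧ #M = k ∧ ∀ e ∈ M, ∀ v ∈ e, v ∈ σ

namespace IsMatchingSet

lemma subset {N : Finset (Sym2 V)} (hM : IsMatchingSet G M) (hN : N ⊆ M) : IsMatchingSet G N :=
  ⟨fun e he => hM.1 e (hN he), fun e he f hf => hM.2 e (hN he) f (hN hf)⟩

lemma eq_of_mem (hM : IsMatchingSet G M) {e f : Sym2 V} (he : e ∈ M) (hf : f ∈ M) (hve : v ∈ e)
    (hvf : v ∈ f) : e = f :=
  by_contra fun hne => hM.2 e he f hf hne v hve hvf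

lemma exists_adj_of_mem (hM : IsMatchingSet G M) {e : Sym2 V} (he : e ∈ M) (hx : x ∈ e) :
    ∃ y, G.Adj x y ∧ e = s(x, y) := by
  obtain ⟨y, rfl⟩ := Sym2.mem_iff_exists.1 hx
  exact ⟨y, G.mem_edgeSet.1 (hM.1 _ he), rfl⟩

lemma insert_edge [DecidableEq V] (hM : IsMatchingSet G M) (hxy : G.Adj x y)
    (hdisj : ∀ e ∈ M, ∀ v ∈ e, v ≠ x ∧ v ≠ y) : IsMatchingSet G (insert s(x, y) M) := by
  simp only [IsMatchingSet, Finset.forall_mem_insert, Sym2.mem_iff]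
  refine ⟨⟨G.mem_edgeSet.2 hxy, hM.1⟩, ⟨fun h => absurd rfl h, fun f hf _ v hv hvf => ?_⟩,
    fun e he => ⟨fun _ v hve hv => ?_, hM.2 e he⟩⟩
  · exact not_or_intro (hdisj f hf v hvf).1 (hdisj f hf v hvf).2 hv
  · exact not_or_intro (hdisj e he v hve).1 (hdisj e he v hve).2 hv

lemma hasMatching_of_card_eq_succ (hM : IsMatchingSet G M) (hcard : #M = k + 1)
    {P : Sym2 V → Prop} (hP : ∀ e ∈ M, ∀ f ∈ M, P e → P f → e = f)
    (hσ : ∀ e ∈ M, ¬ P e → ∀ v ∈ e, v ∈ σ) : HasMatching G k σ := by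
  obtain ⟨e, he, hunique⟩ : ∃ e ∈ M, ∀ f ∈ M, f ≠ e → ¬ P f := by
    by_cases h : ∃ e ∈ M, P e
    · obtain ⟨e, he, hPe⟩ := h
      exact ⟨e, he, fun f hf hne hPf => hne (hP f hf e he hPf hPe)⟩
    · obtain ⟨e, he⟩ := Finset.card_pos.1 (by omega : 0 < #M)
      exact ⟨e, he, fun f hf _ hPf => h ⟨f, hf, hPf⟩⟩
  refine ⟨M.erase e, hM.subset (Finset.erase_subset _ _), ?_, fun f hf => ?_⟩
  · rw [Finset.card_erase_of_mem he, hcard, Nat.add_sub_cancel]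
  · obtain ⟨hne, hfM⟩ := Finset.mem_erase.1 hf
    exact hσ f hfM (hunique f hfM hne)

end IsMatchingSet

namespace HasMatching

lemma mono (h : HasMatching G k σ) (hστ : σ ⊆ τ) : HasMatching G k τ := by
  obtain ⟨M, hM, hcard, hσ⟩ := h
  exact ⟨M, hM, hcard, fun e he v hv => hστ (hσ e he v hv)⟩

lemma anti (h : HasMatching G k σ) (hjk : j ≤ k) : HasMatching G j σ := by
  obtain ⟨M, hM, hcard, hσ⟩ := h
  obtain ⟨N, hN, hNcard⟩ := Finset.exists_subset_card_eq (hcard ▸ hjk)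
  exact ⟨N, hM.subset hN, hNcard, fun e he => hσ e (hN he)⟩

lemma zero : HasMatching G 0 σ := by
  simp [HasMatching, IsMatchingSet]

lemma univ [Fintype V] (hk : k ≤ matchingNumber G) : HasMatching G k Finset.univ := by
  have hmem : matchingNumber G ∈ {k | ∃ M : Finset (Sym2 V), IsMatchingSet G M ∧ #M = k} := by
    refine Nat.sSup_mem ⟨0, ∅, by simp [IsMatchingSet], rfl⟩ ⟨Fintype.card (Sym2 V), ?_⟩
    rintro _ ⟨M, -, rfl⟩
    exact Finset.card_le_univ M
  obtain ⟨M, hM, hcard⟩ := hmem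
  exact anti ⟨M, hM, hcard, fun _ _ _ _ => Finset.mem_univ _⟩ hk

lemma two_mul_le_card (h : HasMatching G k σ) : 2 * k ≤ #σ := by
  obtain ⟨M, hM, hcard, hσ⟩ := h
  have hdisj : (M : Set (Sym2 V)).PairwiseDisjoint Sym2.toFinset := fun e he f hf hne =>
    Finset.disjoint_left.2 fun v hve hvf =>
      hM.2 e he f hf hne v (Sym2.mem_toFinset.1 hve) (Sym2.mem_toFinset.1 hvf)
  calc 2 * k = ∑ e ∈ M, #e.toFinset := by
        rw [Finset.sum_congr rfl fun e he => Sym2.card_toFinset_of_not_isDiag e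
          (G.not_isDiag_of_mem_edgeSet (hM.1 e he)), Finset.sum_const, hcard, smul_eq_mul, mul_comm]
    _ = #(M.biUnion Sym2.toFinset) := (Finset.card_biUnion hdisj).symm
    _ ≤ #σ := Finset.card_le_card <| Finset.biUnion_subset.2 fun e he v hv =>
        hσ e he v (Sym2.mem_toFinset.1 hv)

lemma nonempty (h : HasMatching G (k + 1) σ) : σ.Nonempty :=
  Finset.card_pos.1 (by have := h.two_mul_le_card; omega)

lemma of_forall_not_adj (h : HasMatching G k τ) (hτ : ∀ v ∈ τ, v ∉ σ → ∀ w ∈ τ, ¬ G.Adj v w) :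
    HasMatching G k σ := by
  obtain ⟨M, hM, hcard, hMτ⟩ := h
  refine ⟨M, hM, hcard, fun e he v hv => by_contra fun hvσ => ?_⟩
  obtain ⟨w, hvw, rfl⟩ := hM.exists_adj_of_mem he hv
  exact hτ v (hMτ _ he v hv) hvσ w (hMτ _ he w (Sym2.mem_mk_right v w)) hvw

lemma one_of_adj (hx : x ∈ σ) (hy : y ∈ σ) (hxy : G.Adj x y) : HasMatching G 1 σ :=
  ⟨{s(x, y)}, by simp [IsMatchingSet, hxy], Finset.card_singleton _, by simp [hx, hy]⟩

variable [DecidableEq V]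

lemma of_insert_of_forall_not_adj (h : HasMatching G k (insert v σ))
    (hv : ∀ w ∈ σ, ¬ G.Adj v w) : HasMatching G k σ := by
  refine h.of_forall_not_adj fun u hu huσ w hw => ?_
  obtain rfl := Finset.eq_of_mem_insert_of_notMem hu huσ
  obtain rfl | hw := Finset.mem_insert.1 hw
  exacts [G.irrefl, hv w hw]

lemma of_succ_insert (h : HasMatching G (k + 1) (insert v σ)) : HasMatching G k σ := by
  obtain ⟨M, hM, hcard, hσ⟩ := h
  refine hM.hasMatching_of_card_eq_succ hcard (P := (v ∈ ·))
    (fun e he f hf => hM.eq_of_mem he hf) fun e he hve u hu => ?_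
  exact Finset.mem_of_mem_insert_of_ne (hσ e he u hu) (ne_of_mem_of_not_mem hu hve)

lemma succ_of_sdiff (h : HasMatching G k (σ \ {x, y})) (hx : x ∈ σ) (hy : y ∈ σ)
    (hxy : G.Adj x y) : HasMatching G (k + 1) σ := by
  obtain ⟨M, hM, hcard, hσ⟩ := h
  have hdisj : ∀ e ∈ M, ∀ v ∈ e, v ≠ x ∧ v ≠ y := fun e he v hv => by
    have := (Finset.mem_sdiff.1 (hσ e he v hv)).2
    rwa [Finset.mem_insert, Finset.mem_singleton, not_or] at this
  refine ⟨insert s(x, y) M, hM.insert_edge hxy hdisj, ?_, ?_⟩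
  · rw [Finset.card_insert_of_notMem fun h => (hdisj _ h x (Sym2.mem_mk_left x y)).1 rfl, hcard]
  · simp only [Finset.forall_mem_insert, Sym2.mem_iff, forall_eq_or_imp, forall_eq]
    exact ⟨⟨hx, hy⟩, fun e he v hv => Finset.sdiff_subset (hσ e he v hv)⟩

lemma of_succ_insert_insert (h : HasMatching G (k + 1) (insert x (insert y σ)))
    (hleaf : ∀ w ∈ σ, G.Adj x w → w = y) : HasMatching G k σ := by
  obtain ⟨M, hM, hcard, hσ⟩ := h
  refine hM.hasMatching_of_card_eq_succ hcard (P := (y ∈ ·))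
    (fun e he f hf => hM.eq_of_mem he hf) fun e he hye u hu => ?_
  have hux : u ≠ x := by
    rintro rfl
    obtain ⟨w, huw, rfl⟩ := hM.exists_adj_of_mem he hu
    have hw := Sym2.mem_mk_right u w
    refine hye ((?_ : w = y) ▸ hw)
    obtain rfl | rfl | hwσ := by simpa only [Finset.mem_insert] using hσ _ he w hw
    exacts [absurd rfl huw.ne, rfl, hleaf w hwσ huw]
  refine Finset.mem_of_mem_insert_of_ne (Finset.mem_of_mem_insert_of_ne (hσ e he u hu) hux) ?_
  exact ne_of_mem_of_not_mem hu hye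

lemma succ_insert_insert_iff (hx : x ∉ σ) (hy : y ∉ σ) (hxy : G.Adj x y)
    (hleaf : ∀ w ∈ σ, G.Adj x w → w = y) :
    HasMatching G (k + 1) (insert x (insert y σ)) ↔ HasMatching G k σ := by
  refine ⟨fun h => h.of_succ_insert_insert hleaf, fun h => ?_⟩
  refine succ_of_sdiff (h.mono fun u hu => Finset.mem_sdiff.2
    ⟨Finset.mem_insert_of_mem (Finset.mem_insert_of_mem hu), ?_⟩) (Finset.mem_insert_self x _)
    (Finset.mem_insert_of_mem (Finset.mem_insert_self y σ)) hxy
  rw [Finset.mem_insert, Finset.mem_singleton, not_or]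
  exact ⟨ne_of_mem_of_not_mem hu hx, ne_of_mem_of_not_mem hu hy⟩

end HasMatching

variable (G) in
/-- The faces contained in `c` of the complex of the vertex sets without a `k`-matching, which is
the Stanley–Reisner complex of the `k`-th squarefree power of the edge ideal. -/
def matchingFree (k : ℕ) (c : Finset V) : Set (Finset V) :=
  {σ | σ ⊆ c ∧ ¬ HasMatching G k σ}

lemma isLowerSet_matchingFree (k : ℕ) (c : Finset V) : IsLowerSet (matchingFree G k c) :=
  fun _ _ hστ h => ⟨hστ.trans h.1, fun hM => h.2 (hM.mono hστ)⟩

lemma matchingFree_univ_inter_Iic [Fintype V] (k : ℕ) (c : Finset V) :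
    matchingFree G k Finset.univ ∩ Set.Iic c = matchingFree G k c := by
  ext σ
  exact ⟨fun h => ⟨h.2, h.1.2⟩, fun h => ⟨⟨Finset.subset_univ σ, h.2⟩, h.1⟩⟩

lemma matchingFree_zero (c : Finset V) : matchingFree G 0 c = ∅ :=
  Set.eq_empty_of_forall_notMem fun _ h => h.2 .zero

lemma matchingFree_subset_succ (k : ℕ) (c : Finset V) :
    matchingFree G k c ⊆ matchingFree G (k + 1) c :=
  fun _ h => ⟨h.1, fun hM => h.2 (hM.anti k.le_succ)⟩

lemma empty_mem_matchingFree (hk : 1 ≤ k) (c : Finset V) : ∅ ∈ matchingFree G k c :=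
  ⟨Finset.empty_subset c, fun h => Finset.not_nonempty_empty (h.anti hk).nonempty⟩

lemma insert_mem_matchingFree_succ [DecidableEq V] {c : Finset V} (hv : v ∈ c)
    (hσ : σ ∈ matchingFree G k c) : insert v σ ∈ matchingFree G (k + 1) c :=
  ⟨Finset.insert_subset hv hσ.1, fun h => hσ.2 h.of_succ_insert⟩

lemma edgeIdealSqPow_eq_stanleyReisnerIdeal {K : Type*} [Field K] {n : ℕ}
    (G : SimpleGraph (Fin n)) (k : ℕ) :
    edgeIdealSqPow K G k = stanleyReisnerIdeal K (matchingFree G k Finset.univ) := by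
  refine le_antisymm (Ideal.span_mono ?_) (Ideal.span_le.2 ?_)
  · rintro _ ⟨M, hM, hcard, rfl⟩
    exact ⟨_, fun h => h.2 ⟨M, hM, hcard, fun e he v hv => by simpa using ⟨e, he, hv⟩⟩, rfl⟩
  · rintro _ ⟨σ, hσ, rfl⟩
    obtain ⟨M, hM, hcard, hMσ⟩ : HasMatching G k σ :=
      not_not.1 fun h => hσ ⟨Finset.subset_univ σ, h⟩
    refine Ideal.mem_of_dvd _ (Finset.prod_dvd_prod_of_subset _ _ _ fun v hv => ?_)
      (Ideal.subset_span ⟨M, hM, hcard, rfl⟩)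
    obtain ⟨-, e, he, hve⟩ := Finset.mem_filter.1 hv
    exact hMσ e he v hve

end Matching

section LeafStar

variable {V : Type*} {G : SimpleGraph V} {X H τ b : Finset V} {j k : ℕ}
  {x y z : V}

variable (G) in
/-- The vertex `v` has at most one neighbour in `a`. -/
def AtMostOneAdj (a : Finset V) (v : V) : Prop :=
  (↑a ∩ G.neighborSet v).Subsingleton

variable [DecidableEq V]

variable (G) in
/-- In the graph induced by `G` on `insert y (X ∪ H)`, the vertices in the nonempty set `X` are
leaves attached to `y`, and `y` has at most one neighbour in the remaining part `H`. -/
structure LeafStar (y : V) (X H : Finset V) : Prop where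
  notMem_leaves : y ∉ X
  notMem_rest : y ∉ H
  disjoint : Disjoint X H
  nonempty : X.Nonempty
  adj : ∀ x ∈ X, G.Adj x y
  not_adj : ∀ x ∈ X, ∀ v ∈ X ∪ H, ¬ G.Adj x v
  atMostOneAdj : AtMostOneAdj G H y

variable (G) in
/-- The link of the vertex `y ∉ H` in the complex `matchingFree G k (insert y H)`. -/
def matchingFreeLink (k : ℕ) (y : V) (H : Finset V) : Set (Finset V) :=
  {τ | τ ⊆ H ∧ ¬ HasMatching G k (insert y τ)}

lemma isLowerSet_matchingFreeLink (k : ℕ) (y : V) (H : Finset V) :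
    IsLowerSet (matchingFreeLink G k y H) :=
  fun _ _ hστ h => ⟨hστ.trans h.1, fun hM => h.2 (hM.mono (Finset.insert_subset_insert y hστ))⟩

lemma matchingFree_subset_matchingFreeLink_succ (k : ℕ) (y : V) (H : Finset V) :
    matchingFree G k H ⊆ matchingFreeLink G (k + 1) y H :=
  fun _ h => ⟨h.1, fun hM => h.2 hM.of_succ_insert⟩

lemma matchingFreeLink_eq_matchingFree (k : ℕ) (h : ∀ v ∈ H, ¬ G.Adj y v) :
    matchingFreeLink G k y H = matchingFree G k H := by
  ext τ
  exact and_congr_right fun hτ => not_congr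
    ⟨fun hM => hM.of_insert_of_forall_not_adj fun w hw => h w (hτ hw),
      fun hM => hM.mono (Finset.subset_insert y τ)⟩

namespace LeafStar

lemma mono (h : LeafStar G y X H) (hb : b ⊆ H) : LeafStar G y X b where
  notMem_leaves := h.notMem_leaves
  notMem_rest := fun hy => h.notMem_rest (hb hy)
  disjoint := h.disjoint.mono_right hb
  nonempty := h.nonempty
  adj := h.adj
  not_adj := fun x hx v hv => h.not_adj x hx v (Finset.union_subset_union_right hb hv)
  atMostOneAdj := h.atMostOneAdj.anti (Set.inter_subset_inter_left _ (Finset.coe_subset.2 hb))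

lemma card (h : LeafStar G y X H) : #(insert y (X ∪ H)) = 1 + #X + #H := by
  rw [Finset.card_insert_of_notMem (Finset.notMem_union.2 ⟨h.notMem_leaves, h.notMem_rest⟩),
    Finset.card_union_of_disjoint h.disjoint]
  ring

lemma rest_ssubset (h : LeafStar G y X H) : H ⊂ insert y (X ∪ H) :=
  Finset.ssubset_iff_of_subset
    (Finset.subset_union_right.trans (Finset.subset_insert y _)) |>.2
    ⟨y, Finset.mem_insert_self y _, h.notMem_rest⟩

lemma eq_of_adj (h : LeafStar G y X H) {v w : V} (hv : v ∈ H) (hw : w ∈ H) (hyv : G.Adj y v)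
    (hyw : G.Adj y w) : v = w :=
  h.atMostOneAdj ⟨hv, hyv⟩ ⟨hw, hyw⟩

lemma hasMatching_inter_iff (h : LeafStar G y X H) (hτ : τ ⊆ X ∪ H) :
    HasMatching G j (τ ∩ H) ↔ HasMatching G j τ := by
  refine ⟨fun hM => hM.mono Finset.inter_subset_left, fun hM => ?_⟩
  refine hM.of_forall_not_adj fun v hv hvH w hw => ?_
  have hvX : v ∈ X := (Finset.mem_union.1 (hτ hv)).resolve_right fun hv' =>
    hvH (Finset.mem_inter.2 ⟨hv, hv'⟩)
  exact h.not_adj v hvX w (hτ hw)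

lemma hasMatching_succ_insert_iff (h : LeafStar G y X H) (hτ : τ ⊆ X ∪ H) (hxX : x ∈ X)
    (hxτ : x ∈ τ) : HasMatching G (k + 1) (insert y τ) ↔ HasMatching G k (τ ∩ H) := by
  have hyτ : y ∉ τ := fun hy => Finset.notMem_union.2 ⟨h.notMem_leaves, h.notMem_rest⟩ (hτ hy)
  have hsub : τ.erase x ⊆ X ∪ H := (Finset.erase_subset x τ).trans hτ
  have hinter : τ.erase x ∩ H = τ ∩ H := by
    rw [Finset.erase_inter, Finset.erase_eq_of_notMem]
    exact fun hx => Finset.disjoint_left.1 h.disjoint hxX (Finset.mem_inter.1 hx).2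
  calc HasMatching G (k + 1) (insert y τ)
      ↔ HasMatching G (k + 1) (insert x (insert y (τ.erase x))) := by
        rw [Finset.insert_comm, Finset.insert_erase hxτ]
    _ ↔ HasMatching G k (τ.erase x) :=
        HasMatching.succ_insert_insert_iff (Finset.notMem_erase x τ)
          (fun hy => hyτ (Finset.mem_of_mem_erase hy)) (h.adj x hxX)
          fun v hv hxv => absurd hxv (h.not_adj x hxX v (hsub hv))
    _ ↔ HasMatching G k (τ ∩ H) := by rw [← h.hasMatching_inter_iff hsub, hinter]

lemma hasMatching_succ_iff (h : LeafStar G y X H) :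
    HasMatching G (k + 1) (insert y (X ∪ H)) ↔ HasMatching G k H := by
  obtain ⟨x, hx⟩ := h.nonempty
  rw [h.hasMatching_succ_insert_iff subset_rfl hx (Finset.mem_union_left H hx),
    Finset.union_inter_cancel_right]

lemma hasMatching_succ_insert_insert_iff (h : LeafStar G y X H) (hτ : τ ⊆ X ∪ H) (hx : x ∈ X) :
    HasMatching G (k + 1) (insert x (insert y τ)) ↔ HasMatching G k (τ ∩ H) := by
  rw [Finset.insert_comm, h.hasMatching_succ_insert_iff
    (Finset.insert_subset (Finset.mem_union_left H hx) hτ) hx (Finset.mem_insert_self x τ),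
    Finset.insert_inter_of_notMem (Finset.disjoint_left.1 h.disjoint hx)]

lemma hasMatching_insert_leaf_iff (h : LeafStar G y X H) (hτ : τ ⊆ X ∪ H) (hx : x ∈ X) :
    HasMatching G j (insert x τ) ↔ HasMatching G j τ := by
  rw [← h.hasMatching_inter_iff (Finset.insert_subset (Finset.mem_union_left H hx) hτ),
    Finset.insert_inter_of_notMem (Finset.disjoint_left.1 h.disjoint hx),
    h.hasMatching_inter_iff hτ]

lemma matchingFree_sdiff_vertexStar (h : LeafStar G y X H) (hx : x ∈ X) (k : ℕ) :
    matchingFree G (k + 1) (insert y (X ∪ H)) \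
        vertexStar (matchingFree G (k + 1) (insert y (X ∪ H))) x =
      insert y '' (matchingFreeLink G (k + 1) y H \ matchingFree G k H) := by
  ext σ
  constructor
  · rintro ⟨⟨hσ, hfree⟩, hstar⟩
    have hxσ : HasMatching G (k + 1) (insert x σ) := not_not.1 fun hM =>
      hstar ⟨Finset.insert_subset (Finset.mem_insert_of_mem (Finset.mem_union_left H hx)) hσ, hM⟩
    have hyσ : y ∈ σ := by
      by_contra hyσ
      have hσXH := (Finset.subset_insert_iff_of_notMem hyσ).1 hσ
      exact hfree ((h.hasMatching_insert_leaf_iff hσXH hx).1 hxσ)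
    obtain ⟨τ, hyτ, rfl⟩ : ∃ τ, y ∉ τ ∧ insert y τ = σ :=
      ⟨σ.erase y, Finset.notMem_erase y σ, Finset.insert_erase hyσ⟩
    have hτXH : τ ⊆ X ∪ H := (Finset.insert_subset_insert_iff hyτ).1 hσ
    have hMτ := (h.hasMatching_succ_insert_insert_iff hτXH hx).1 hxσ
    have hτH : τ ⊆ H := fun w hw => (Finset.mem_union.1 (hτXH hw)).resolve_left fun hwX =>
      hfree ((h.hasMatching_succ_insert_iff hτXH hwX hw).2 hMτ)
    rw [Finset.inter_eq_left.2 hτH] at hMτ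
    exact ⟨τ, ⟨⟨hτH, hfree⟩, fun hτ => hτ.2 hMτ⟩, rfl⟩
  · rintro ⟨τ, ⟨⟨hτH, hτ⟩, hfree⟩, rfl⟩
    have hτXH : τ ⊆ X ∪ H := hτH.trans Finset.subset_union_right
    refine ⟨⟨Finset.insert_subset_insert y hτXH, hτ⟩, fun hstar => hfree ⟨hτH, fun hM => ?_⟩⟩
    refine hstar.2 ((h.hasMatching_succ_insert_insert_iff hτXH hx).2 ?_)
    rwa [Finset.inter_eq_left.2 hτH]

lemma hasMatching_succ_insert_neighbor_iff (h : LeafStar G y X H) (hz : z ∈ H) (hyz : G.Adj y z)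
    (hτ : τ ⊆ H.erase z) :
    HasMatching G (k + 1) (insert y (insert z τ)) ↔ HasMatching G k τ := by
  have hτH : τ ⊆ H := hτ.trans (Finset.erase_subset z H)
  exact HasMatching.succ_insert_insert_iff (fun hy => h.notMem_rest (hτH hy))
    (fun hzτ => Finset.notMem_erase z H (hτ hzτ)) hyz
    fun v hv hyv => h.eq_of_adj (hτH hv) hz hyv hyz

lemma matchingFreeLink_sdiff_vertexStar (h : LeafStar G y X H) (hz : z ∈ H) (hyz : G.Adj y z)
    (k : ℕ) :
    matchingFreeLink G (k + 1) y H \ vertexStar (matchingFreeLink G (k + 1) y H) z =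
      matchingFree G (k + 1) (H.erase z) \ matchingFree G k (H.erase z) := by
  have hlink : matchingFreeLink G (k + 1) y (H.erase z) = matchingFree G (k + 1) (H.erase z) :=
    matchingFreeLink_eq_matchingFree _ fun v hv hyv => Finset.ne_of_mem_erase hv
      (h.eq_of_adj (Finset.mem_of_mem_erase hv) hz hyv hyz)
  rw [← hlink]
  ext τ
  constructor
  · rintro ⟨⟨hτH, hτ⟩, hstar⟩
    have hM : HasMatching G (k + 1) (insert y (insert z τ)) := not_not.1 fun hM =>
      hstar ⟨Finset.insert_subset hz hτH, hM⟩
    have hzτ : z ∉ τ := fun hzτ => hτ (by rwa [Finset.insert_eq_of_mem hzτ] at hM)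
    have hτz : τ ⊆ H.erase z := Finset.subset_erase.2 ⟨hτH, hzτ⟩
    exact ⟨⟨hτz, hτ⟩, fun hfree =>
      hfree.2 ((h.hasMatching_succ_insert_neighbor_iff hz hyz hτz).1 hM)⟩
  · rintro ⟨⟨hτz, hτ⟩, hfree⟩
    refine ⟨⟨hτz.trans (Finset.erase_subset z H), hτ⟩, fun hstar => hfree ⟨hτz, fun hM => ?_⟩⟩
    exact hstar.2 ((h.hasMatching_succ_insert_neighbor_iff hz hyz hτz).2 hM)

lemma exists_insert_mem_matchingFreeLink (h : LeafStar G y X H) (hH : H.Nonempty) (k : ℕ) :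
    ∃ v, ∀ σ ∈ matchingFree G k H, insert v σ ∈ matchingFreeLink G (k + 1) y H := by
  obtain ⟨v, hv, hleaf⟩ : ∃ v ∈ H, ∀ w ∈ H, G.Adj y w → w = v := by
    by_cases hz : ∃ z ∈ H, G.Adj y z
    · obtain ⟨z, hz, hyz⟩ := hz
      exact ⟨z, hz, fun w hw hyw => h.eq_of_adj hw hz hyw hyz⟩
    · obtain ⟨v, hv⟩ := hH
      exact ⟨v, hv, fun w hw hyw => absurd ⟨w, hw, hyw⟩ hz⟩
  exact ⟨v, fun σ hσ => ⟨Finset.insert_subset hv hσ.1, fun hM =>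
    hσ.2 (hM.of_succ_insert_insert fun w hw => hleaf w (hσ.1 hw))⟩⟩

end LeafStar

end LeafStar

section LeafStarCohomology

variable {V : Type*} [LinearOrder V] {G : SimpleGraph V} {X H : Finset V} {k : ℕ} {y z : V}
  {R : Type*} [CommRing R] {s : ℤ}

namespace LeafStar

lemma cohomologyVanishes_iff (h : LeafStar G y X H) :
    CohomologyVanishes R (matchingFree G (k + 1) (insert y (X ∪ H))) (s + 1) ↔
      CohomologyVanishes R (matchingFreeLink G (k + 1) y H \ matchingFree G k H) s := by
  obtain ⟨x, hx⟩ := h.nonempty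
  rw [CohomologyVanishes.iff_sdiff_vertexStar (isLowerSet_matchingFree _ _) x,
    h.matchingFree_sdiff_vertexStar hx, CohomologyVanishes.image_insert_iff]
  exact fun τ hτ hy => h.notMem_rest (hτ.1.1 hy)

lemma cohomologyVanishes_link_iff (h : LeafStar G y X H) (hz : z ∈ H) (hyz : G.Adj y z) :
    CohomologyVanishes R (matchingFreeLink G (k + 1) y H) s ↔
      CohomologyVanishes R (matchingFree G (k + 1) (H.erase z) \ matchingFree G k (H.erase z))
        s := by
  rw [CohomologyVanishes.iff_sdiff_vertexStar (isLowerSet_matchingFreeLink _ _ _) z,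
    h.matchingFreeLink_sdiff_vertexStar hz hyz]

lemma cohomologyVanishes_rest (h : LeafStar G y X H) (hH : H.Nonempty)
    (hv : CohomologyVanishes R (matchingFree G (k + 1) (insert y (X ∪ H))) (s + 2)) :
    CohomologyVanishes R (matchingFree G k H) s := by
  obtain ⟨v, hapex⟩ := h.exists_insert_mem_matchingFreeLink hH k
  rw [← one_add_one_eq_two, ← add_assoc, h.cohomologyVanishes_iff] at hv
  simpa only [add_sub_cancel_right] using hv.sub_one_of_sdiff_of_insert_mem
    (isLowerSet_matchingFree _ _) (isLowerSet_matchingFreeLink _ _ _) hapex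

lemma cohomologyVanishes_rest_erase (h : LeafStar G y X H) (hz : z ∈ H) (hyz : G.Adj y z)
    (hne : (H.erase z).Nonempty)
    (hv : CohomologyVanishes R (matchingFree G (k + 1) (insert y (X ∪ H))) (s + 2)) :
    CohomologyVanishes R (matchingFree G k (H.erase z)) s := by
  obtain ⟨v, hapex⟩ := h.exists_insert_mem_matchingFreeLink ⟨z, hz⟩ k
  obtain ⟨u, hu⟩ := hne
  rw [← one_add_one_eq_two, ← add_assoc, h.cohomologyVanishes_iff] at hv
  have hlink := hv.of_sdiff_of_insert_mem
    (isLowerSet_matchingFree _ _) (isLowerSet_matchingFreeLink _ _ _) hapex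
  rw [h.cohomologyVanishes_link_iff hz hyz] at hlink
  simpa only [add_sub_cancel_right] using hlink.sub_one_of_sdiff_of_insert_mem
    (isLowerSet_matchingFree _ _) (isLowerSet_matchingFree _ _)
    fun σ hσ => insert_mem_matchingFree_succ hu hσ

lemma cohomologyVanishes_of_link (h : LeafStar G y X H)
    (hrest : CohomologyVanishes R (matchingFree G k H) s)
    (hlink : CohomologyVanishes R (matchingFreeLink G (k + 1) y H) (s + 1)) :
    CohomologyVanishes R (matchingFree G (k + 1) (insert y (X ∪ H))) (s + 2) := by
  rw [← one_add_one_eq_two, ← add_assoc, h.cohomologyVanishes_iff]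
  exact .sdiff (isLowerSet_matchingFree _ _) (isLowerSet_matchingFreeLink _ _ _)
    (matchingFree_subset_matchingFreeLink_succ k y H) (by rwa [add_sub_cancel_right]) hlink

lemma cohomologyVanishes_of_forall_not_adj (h : LeafStar G y X H) (hy : ∀ v ∈ H, ¬ G.Adj y v)
    (hrest : CohomologyVanishes R (matchingFree G k H) s)
    (hrest' : CohomologyVanishes R (matchingFree G (k + 1) H) (s + 1)) :
    CohomologyVanishes R (matchingFree G (k + 1) (insert y (X ∪ H))) (s + 2) :=
  h.cohomologyVanishes_of_link hrest (by rwa [matchingFreeLink_eq_matchingFree _ hy])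

lemma cohomologyVanishes_of_adj (h : LeafStar G y X H) (hz : z ∈ H) (hyz : G.Adj y z)
    (hrest : CohomologyVanishes R (matchingFree G k H) s)
    (herase : CohomologyVanishes R (matchingFree G k (H.erase z)) s)
    (herase' : CohomologyVanishes R (matchingFree G (k + 1) (H.erase z)) (s + 1)) :
    CohomologyVanishes R (matchingFree G (k + 1) (insert y (X ∪ H))) (s + 2) := by
  refine h.cohomologyVanishes_of_link hrest ((h.cohomologyVanishes_link_iff hz hyz).2 ?_)
  exact .sdiff (isLowerSet_matchingFree _ _) (isLowerSet_matchingFree _ _)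
    (matchingFree_subset_succ k _) (by rwa [add_sub_cancel_right]) herase'

lemma not_cohomologyVanishes_cases (h : LeafStar G y X H) (hH : H.Nontrivial)
    (hv : ¬ CohomologyVanishes R (matchingFree G (k + 1) (insert y (X ∪ H))) (s + 2)) :
    ¬ CohomologyVanishes R (matchingFree G k H) s ∨
      (∃ z ∈ H, G.Adj y z ∧ ¬ CohomologyVanishes R (matchingFree G k (H.erase z)) s) ∨
      ¬ CohomologyVanishes R (matchingFree G (k + 2) (insert y (X ∪ H))) (s + 1 + 2) := by
  by_contra! ⟨hrest, herase, hnext⟩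
  refine hv ?_
  by_cases hz : ∃ z ∈ H, G.Adj y z
  · obtain ⟨z, hz, hyz⟩ := hz
    exact h.cohomologyVanishes_of_adj hz hyz hrest (herase z hz hyz)
      (h.cohomologyVanishes_rest_erase hz hyz hH.erase_nonempty hnext)
  · push Not at hz
    exact h.cohomologyVanishes_of_forall_not_adj hz hrest
      (h.cohomologyVanishes_rest hH.nonempty hnext)

end LeafStar

end LeafStarCohomology

section Forest

variable {V : Type*} {G : SimpleGraph V} {a : Finset V}

variable (G) in
/-- Every vertex of the subgraph of `G` induced on `a` has a neighbour there. -/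
def NoIsolatedVertex (a : Finset V) : Prop :=
  ∀ v ∈ a, ∃ w ∈ a, G.Adj v w

lemma exists_neighborSet_subsingleton [Finite V] [Nonempty V] (hG : G.IsAcyclic) :
    ∃ y, (G.neighborSet y).Subsingleton := by
  obtain ⟨y, v, p, hp, hmax⟩ :=
    SimpleGraph.Walk.exists_isPath_forall_isPath_length_le_length G
  have hsnd : ∀ w, G.Adj y w → w = p.snd := fun w hyw => by
    refine hG.eq_snd_of_adj_start hp hyw (by_contra fun hw => ?_)
    exact (hmax _ _ _ (hp.cons (h := hyw.symm) hw)).not_gt (Nat.lt_succ_self _)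
  exact ⟨y, fun u hu w hw => (hsnd u hu).trans (hsnd w hw).symm⟩

lemma exists_atMostOneAdj (hG : G.IsAcyclic) (ha : a.Nonempty) : ∃ y ∈ a, AtMostOneAdj G a y := by
  have : Nonempty (a : Set V) := ha.to_subtype
  obtain ⟨y, hy⟩ := exists_neighborSet_subsingleton (hG.induce (a : Set V))
  exact ⟨y, y.2, fun u hu w hw => congrArg Subtype.val
    (@hy ⟨u, hu.1⟩ (G.induce_adj.2 hu.2) ⟨w, hw.1⟩ (G.induce_adj.2 hw.2))⟩

-- A leaf `y` of the forest induced on the non-leaves of `a` has lost a neighbour, which is a leaf.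
lemma exists_adj_leaf_atMostOneAdj (hG : G.IsAcyclic) (ha : a.Nonempty)
    (hiso : NoIsolatedVertex G a) :
    ∃ y ∈ a, (∃ x ∈ a, G.Adj x y ∧ AtMostOneAdj G a x) ∧
      AtMostOneAdj G {v ∈ a | ¬ AtMostOneAdj G a v} y := by
  obtain hB | hB := Finset.eq_empty_or_nonempty {v ∈ a | ¬ AtMostOneAdj G a v}
  · have hleaf : ∀ v ∈ a, AtMostOneAdj G a v := fun v hv =>
      not_not.1 (Finset.filter_eq_empty_iff.1 hB hv)
    obtain ⟨y, hy⟩ := ha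
    obtain ⟨x, hx, hyx⟩ := hiso y hy
    exact ⟨y, hy, ⟨x, hx, hyx.symm, hleaf x hx⟩, by
      rw [hB, AtMostOneAdj, Finset.coe_empty, Set.empty_inter]
      exact Set.subsingleton_empty⟩
  · obtain ⟨y, hy, hyB⟩ := exists_atMostOneAdj hG hB
    obtain ⟨hya, hynot⟩ := Finset.mem_filter.1 hy
    refine ⟨y, hya, by_contra fun hleaf => hynot fun u hu w hw => ?_, hyB⟩
    have hnonleaf : ∀ x ∈ a, G.Adj y x → x ∈ ({v ∈ a | ¬ AtMostOneAdj G a v} : Finset V) :=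
      fun x hx hyx => Finset.mem_filter.2 ⟨hx, fun h => hleaf ⟨x, hx, hyx.symm, h⟩⟩
    exact hyB ⟨hnonleaf u hu.1 hu.2, hu.2⟩ ⟨hnonleaf w hw.1 hw.2, hw.2⟩

lemma NoIsolatedVertex.exists_adj_ne (hiso : NoIsolatedVertex G a) {u y : V} (hu : u ∈ a)
    (h : G.Adj u y → ¬ AtMostOneAdj G a u) : ∃ w ∈ a, w ≠ y ∧ G.Adj u w := by
  obtain ⟨w, hw, huw⟩ := hiso u hu
  obtain rfl | hwy := eq_or_ne w y
  · obtain ⟨w', ⟨hw', huw'⟩, hne⟩ :=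
      (Set.not_subsingleton_iff.1 (h huw)).exists_ne w
    exact ⟨w', hw', hne, huw'⟩
  · exact ⟨w, hw, hwy, huw⟩

lemma exists_leafStar [DecidableEq V] (hG : G.IsAcyclic) (ha : a.Nonempty)
    (hiso : NoIsolatedVertex G a) :
    ∃ y X H, a = insert y (X ∪ H) ∧ LeafStar G y X H ∧ NoIsolatedVertex G H := by
  obtain ⟨y, hya, ⟨x, hxa, hxy, hx⟩, hy⟩ := exists_adj_leaf_atMostOneAdj hG ha hiso
  set X : Finset V := {x ∈ a | G.Adj x y ∧ AtMostOneAdj G a x} with hXdef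
  set H : Finset V := a \ insert y X with hHdef
  have hX : X ⊆ a := Finset.filter_subset _ a
  have hyX : y ∉ X := fun h => G.irrefl (Finset.mem_filter.1 h).2.1
  have hyH : y ∉ H := fun h => (Finset.mem_sdiff.1 h).2 (Finset.mem_insert_self y X)
  have hXH : insert y (X ∪ H) = a := by
    rw [← Finset.insert_union, Finset.union_sdiff_of_subset (Finset.insert_subset hya hX)]
  have hnonleaf {u : V} (hu : u ∈ H) (huy : G.Adj u y) : ¬ AtMostOneAdj G a u := fun h =>
    (Finset.mem_sdiff.1 hu).2 (Finset.mem_insert_of_mem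
      (Finset.mem_filter.2 ⟨Finset.sdiff_subset hu, huy, h⟩))
  have hstar : LeafStar G y X H := by
    refine ⟨hyX, hyH, ?_, ⟨x, Finset.mem_filter.2 ⟨hxa, hxy, hx⟩⟩, fun x hx =>
      (Finset.mem_filter.1 hx).2.1, fun x hx v hv hxv => ?_, hy.anti fun u hu => ?_⟩
    · exact Finset.disjoint_sdiff.mono_left (Finset.subset_insert y X)
    · obtain ⟨-, hxy, hleaf⟩ := Finset.mem_filter.1 hx
      have hva : v ∈ a := hXH ▸ Finset.mem_insert_of_mem hv
      obtain rfl : v = y := hleaf ⟨hva, hxv⟩ ⟨hya, hxy⟩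
      exact Finset.notMem_union.2 ⟨hyX, hyH⟩ hv
    · exact ⟨Finset.mem_coe.2 (Finset.mem_filter.2
        ⟨Finset.sdiff_subset hu.1, hnonleaf hu.1 hu.2.symm⟩), hu.2⟩
  refine ⟨y, X, H, hXH.symm, hstar, fun u hu => ?_⟩
  obtain ⟨w, hwa, hwy, huw⟩ := hiso.exists_adj_ne (Finset.sdiff_subset hu) (hnonleaf hu)
  refine ⟨w, Finset.mem_sdiff.2 ⟨hwa, Finset.mem_insert.not.2 (not_or.2 ⟨hwy, fun hwX => ?_⟩)⟩, huw⟩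
  exact hstar.not_adj w hwX u (Finset.mem_union_right X hu) huw.symm

end Forest

section Betti

variable {V : Type*} [LinearOrder V] {G : SimpleGraph V} {R : Type*} [CommRing R]
  {X H a b c : Finset V} {k : ℕ} {s d e : ℤ} {y z : V}

lemma CohomologyVanishes.matchingFree_of_lt (hc : c.Nonempty) (hs : s < 2 * k - 1) :
    CohomologyVanishes R (matchingFree G k c) s := by
  obtain ⟨v, hv⟩ := hc
  refine .of_insert_mem (v := v) (isLowerSet_matchingFree k c) fun σ hσ hcard =>
    ⟨Finset.insert_subset hv hσ.1, fun hM => ?_⟩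
  have := hM.two_mul_le_card
  have := Finset.card_insert_le v σ
  omega

lemma noIsolatedVertex_of_not_cohomologyVanishes
    (h : ¬ CohomologyVanishes R (matchingFree G k c) s) : NoIsolatedVertex G c := by
  intro v hv
  by_contra! hiso
  exact h (.of_insert_mem (v := v) (isLowerSet_matchingFree k c) fun σ hσ _ =>
    ⟨Finset.insert_subset hv hσ.1, fun hM => hσ.2 <|
      hM.of_insert_of_forall_not_adj fun w hw => hiso w (hσ.1 hw)⟩)

lemma not_cohomologyVanishes_matchingFree_of_not_hasMatching [Nontrivial R] (hG : G.IsAcyclic)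
    (hiso : NoIsolatedVertex G b) (hM : HasMatching G (k + 1) b)
    (hmax : ¬ HasMatching G (k + 2) b) :
    ¬ CohomologyVanishes R (matchingFree G (k + 1) b) (2 * k + 1) := by
  induction k generalizing b with
  | zero =>
    obtain ⟨y, X, H, rfl, hstar, hH⟩ := exists_leafStar hG hM.nonempty hiso
    have hHempty : H = ∅ := Finset.eq_empty_of_forall_notMem fun v hv => by
      obtain ⟨w, hw, hvw⟩ := hH v hv
      exact hmax (hstar.hasMatching_succ_iff.2 (.one_of_adj hv hw hvw))
    have hlink : matchingFreeLink G 1 y H \ matchingFree G 0 H = {∅} := by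
      rw [matchingFree_zero, Set.sdiff_empty,
        matchingFreeLink_eq_matchingFree _ (by simp [hHempty])]
      refine Set.eq_singleton_iff_unique_mem.2 ⟨empty_mem_matchingFree le_rfl H, fun σ hσ => ?_⟩
      exact Finset.subset_empty.1 (hHempty ▸ hσ.1)
    rw [Nat.cast_zero, mul_zero, hstar.cohomologyVanishes_iff, hlink]
    exact CohomologyVanishes.not_singleton_empty
  | succ k ih =>
    obtain ⟨y, X, H, rfl, hstar, hH⟩ := exists_leafStar hG hM.nonempty hiso
    have hHM := hstar.hasMatching_succ_iff.1 hM
    refine fun hv => ih hH hHM (fun h => hmax (hstar.hasMatching_succ_iff.2 h)) ?_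
    refine hstar.cohomologyVanishes_rest hHM.nonempty ?_
    convert hv using 1
    push_cast
    ring

-- A minimal set between `c` and `a` with a `(k + 1)`-matching has no isolated vertices.
lemma exists_not_cohomologyVanishes_of_subset [Nontrivial R] (hG : G.IsAcyclic) (hca : c ⊆ a)
    (ha : HasMatching G (k + 1) a) (hc : ¬ HasMatching G (k + 1) c)
    (hiso : NoIsolatedVertex G c) :
    ∃ b, c ⊆ b ∧ b ⊆ a ∧ HasMatching G (k + 1) b ∧
      ¬ CohomologyVanishes R (matchingFree G (k + 1) b) (2 * k + 1) := by
  obtain ⟨b, hba, ⟨hcb, hb⟩, hmin⟩ := exists_minimal_le_of_wellFoundedLT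
    (fun b => c ⊆ b ∧ HasMatching G (k + 1) b) a ⟨hca, ha⟩
  have herase : ∀ v ∈ b, v ∉ c → ¬ HasMatching G (k + 1) (b.erase v) := fun v hvb hvc hM =>
    Finset.notMem_erase v b
      (hmin ⟨Finset.subset_erase.2 ⟨hcb, hvc⟩, hM⟩ (Finset.erase_subset v b) hvb)
  refine ⟨b, hcb, hba, hb, not_cohomologyVanishes_matchingFree_of_not_hasMatching hG
    (fun v hvb => ?_) hb fun hM => ?_⟩
  · by_cases hvc : v ∈ c
    · obtain ⟨w, hw, hvw⟩ := hiso v hvc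
      exact ⟨w, hcb hw, hvw⟩
    · by_contra! hisolated
      rw [← Finset.insert_erase hvb] at hb
      exact herase v hvb hvc (hb.of_insert_of_forall_not_adj fun w hw =>
        hisolated w (Finset.mem_of_mem_erase hw))
  · obtain ⟨v, hvb, hvc⟩ := Finset.not_subset.1 fun hbc : b ⊆ c => hc (hb.mono hbc)
    rw [← Finset.insert_erase hvb] at hM
    exact herase v hvb hvc hM.of_succ_insert

variable (R G) in
/-- Some multigraded Betti number of the quotient by the `k`-th squarefree power of the edge ideal
is nonzero, in a nonempty multidegree `b ⊆ a` and in a homological degree at least `d`. By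
Hochster's formula, the `s`-th cohomology of the restriction of the complex to `b` is in homological
degree `#b - s`. -/
def HasBettiGE (k : ℕ) (a : Finset V) (d : ℤ) : Prop :=
  ∃ b ⊆ a, b.Nonempty ∧ ∃ s : ℤ, ¬ CohomologyVanishes R (matchingFree G k b) s ∧ d ≤ #b - s

lemma HasBettiGE.mono (h : HasBettiGE G R k c d) (hca : c ⊆ a) (hed : e ≤ d) :
    HasBettiGE G R k a e := by
  obtain ⟨b, hbc, hb, s, hs, hd⟩ := h
  exact ⟨b, hbc.trans hca, hb, s, hs, hed.trans hd⟩

lemma LeafStar.hasBettiGE_of_rest (hstar : LeafStar G y X H) (h : HasBettiGE G R k H d) :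
    HasBettiGE G R (k + 1) (insert y (X ∪ H)) (d + #X - 1) := by
  obtain ⟨b, hbH, hb, s, hs, hd⟩ := h
  have hstar' := hstar.mono hbH
  refine ⟨insert y (X ∪ b), Finset.insert_subset_insert y (Finset.union_subset_union_right hbH),
    Finset.insert_nonempty _ _, s + 2, mt (hstar'.cohomologyVanishes_rest hb) hs, ?_⟩
  rw [hstar'.card]
  push_cast
  linarith

lemma LeafStar.hasBettiGE_of_rest_erase (hstar : LeafStar G y X H) (hz : z ∈ H)
    (hyz : G.Adj y z) (h : HasBettiGE G R k (H.erase z) d) :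
    HasBettiGE G R (k + 1) (insert y (X ∪ H)) (d + #X) := by
  obtain ⟨b, hbH, hb, s, hs, hd⟩ := h
  have hzb : z ∉ b := fun h => Finset.notMem_erase z H (hbH h)
  have hsub : insert z b ⊆ H := Finset.insert_subset hz (hbH.trans (Finset.erase_subset z H))
  have hstar' := hstar.mono hsub
  have hrest := hstar'.cohomologyVanishes_rest_erase (R := R) (k := k) (s := s)
    (Finset.mem_insert_self z b) hyz
  rw [Finset.erase_insert hzb] at hrest
  refine ⟨insert y (X ∪ insert z b),
    Finset.insert_subset_insert y (Finset.union_subset_union_right hsub),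
    Finset.insert_nonempty _ _, s + 2, mt (hrest hb) hs, ?_⟩
  rw [hstar'.card, Finset.card_insert_of_notMem hzb]
  push_cast
  linarith

lemma LeafStar.hasBettiGE_of_not_hasMatching_erase [Nontrivial R] (hG : G.IsAcyclic)
    (hstar : LeafStar G y X H) (hiso : NoIsolatedVertex G (insert y (X ∪ H)))
    (hM : HasMatching G (k + 1) H) (herase : ¬ HasMatching G (k + 1) (H.erase z)) (hz : z ∈ H) :
    HasBettiGE G R (k + 2) (insert y (X ∪ H)) (#(insert y (X ∪ H)) - (2 * k + 3)) := by
  have hmax : ¬ HasMatching G (k + 3) (insert y (X ∪ H)) := fun h => by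
    have hMH := hstar.hasMatching_succ_iff.1 h
    rw [← Finset.insert_erase hz] at hMH
    exact herase hMH.of_succ_insert
  have htop := not_cohomologyVanishes_matchingFree_of_not_hasMatching (R := R) hG hiso
    (hstar.hasMatching_succ_iff.2 hM) hmax
  refine ⟨_, subset_rfl, Finset.insert_nonempty _ _, _, htop, ?_⟩
  push_cast
  linarith

lemma hasBettiGE_succ_of_hasMatching [Nontrivial R] (hG : G.IsAcyclic)
    (hM : HasMatching G (k + 1) c) (hs : ¬ CohomologyVanishes R (matchingFree G k c) s) :
    HasBettiGE G R (k + 1) c (#c - s - 2) := by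
  induction c using Finset.strongInduction generalizing k s with
  | H c ih =>
  obtain _ | k := k
  · exact absurd (.of_isEmpty (by simp [matchingFree_zero])) hs
  have hiso := noIsolatedVertex_of_not_cohomologyVanishes hs
  have hlow : ¬ s < 2 * (k + 1 : ℕ) - 1 := mt (.matchingFree_of_lt hM.nonempty) hs
  obtain ⟨y, X, H, rfl, hstar, -⟩ := exists_leafStar hG hM.nonempty hiso
  have hMH : HasMatching G (k + 1) H := hstar.hasMatching_succ_iff.1 hM
  have hH : H.Nontrivial := Finset.one_lt_card_iff_nontrivial.1
    (by have := hMH.two_mul_le_card; omega)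
  obtain ⟨t, rfl⟩ : ∃ t, s = t + 2 := ⟨s - 2, by ring⟩
  have hcard := hstar.card
  obtain hrest | ⟨z, hz, hyz, herase⟩ | hnext := hstar.not_cohomologyVanishes_cases hH hs
  · exact (hstar.hasBettiGE_of_rest (ih H hstar.rest_ssubset hMH hrest)).mono subset_rfl (by omega)
  · have hzcard := Finset.card_erase_add_one hz
    by_cases hMz : HasMatching G (k + 1) (H.erase z)
    · have hlt := (Finset.erase_subset z H).trans_ssubset hstar.rest_ssubset
      exact (hstar.hasBettiGE_of_rest_erase hz hyz (ih _ hlt hMz herase)).mono subset_rfl (by omega)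
    · exact (hstar.hasBettiGE_of_not_hasMatching_erase hG hiso hMH hMz hz).mono subset_rfl
        (by omega)
  · exact ⟨_, subset_rfl, hM.nonempty, _, hnext, by omega⟩

theorem hasBettiGE_succ [Nontrivial R] (hG : G.IsAcyclic) (ha : HasMatching G (k + 1) a)
    (hca : c ⊆ a) (hs : ¬ CohomologyVanishes R (matchingFree G k c) s) :
    HasBettiGE G R (k + 1) a (#c - s - 2) := by
  by_cases hc : HasMatching G (k + 1) c
  · exact (hasBettiGE_succ_of_hasMatching hG hc hs).mono hca le_rfl
  obtain ⟨b, hcb, hba, hb, htop⟩ := exists_not_cohomologyVanishes_of_subset (R := R) hG hca ha hc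
    (noIsolatedVertex_of_not_cohomologyVanishes hs)
  refine ⟨b, hba, hb.nonempty, _, htop, ?_⟩
  have hcard := Finset.card_le_card hcb
  obtain rfl | hne := c.eq_empty_or_nonempty
  · have := mt CohomologyVanishes.of_neg hs
    have := hb.two_mul_le_card
    rw [Finset.card_empty]
    omega
  · have := mt (CohomologyVanishes.matchingFree_of_lt hne) hs
    omega

end Betti

theorem isLeast_depthQuot_edgeIdealSqPow (K : Type*) [Field K] {n : ℕ} (G : SimpleGraph (Fin n))
    {k : ℕ} (hk : 1 ≤ k) :
    IsLeast {d : ℤ | ∃ c s, ¬ CohomologyVanishes K (matchingFree G k c) s ∧ d = n - #c + s}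
      (depthQuot (edgeIdealSqPow K G k)) := by
  simpa only [edgeIdealSqPow_eq_stanleyReisnerIdeal, matchingFree_univ_inter_Iic] using
    isLeast_depthQuot_stanleyReisnerIdeal (K := K) (isLowerSet_matchingFree (G := G) k Finset.univ)
      (empty_mem_matchingFree hk Finset.univ)

/-- For a forest `G`, the normalized depth function
`g_{I(G)}(k) = depth(S/I(G)^{[k]}) - (2k-1)` is non-increasing for `1 ≤ k ≤ ν(G)`. -/
theorem stmt_15 (K : Type*) [Field K] {n : ℕ} (G : SimpleGraph (Fin n))
    (hforest : G.IsAcyclic)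
    (k : ℕ) (h1 : 1 ≤ k) (h2 : k + 1 ≤ matchingNumber G) :
    gEdge K G (k + 1) ≤ gEdge K G k := by
  obtain ⟨c, s, hs, hdepth⟩ := (isLeast_depthQuot_edgeIdealSqPow K G h1).1
  obtain ⟨b, -, -, t, ht, hbt⟩ :=
    hasBettiGE_succ hforest (HasMatching.univ h2) (Finset.subset_univ c) hs
  have hdepth_succ :=
    (isLeast_depthQuot_edgeIdealSqPow K G (by omega : 1 ≤ k + 1)).2 ⟨b, t, ht, rfl⟩
  rw [gEdge, gEdge]
  push_cast
  linarith

end
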